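/- arXiv:1102.0748 — 2 statements merged into one kernel-verified Lean document; each statement's English description precedes it below -/
import Mathlib

section
/- There is exactly one connected parity-reversing pairing on [6] with exactly 3 crossings (b_{3,3} = 1), and for every n ≥ 4 there are exactly two connected parity-reversing pairings on [2n] with exactly n crossings (b_{n,n} = 2). -/
open scoped Classical

/-- Asymmetric crossing of two chords: `B = {a,b}` with `a < b` starts strictly
before `C = {c,d}` and they interleave: `a < c < b < d`. -/
def CrossAsym (B C : Finset ℕ) : Prop :=
  ∃ a b c d : ℕ, a < c ∧ c < b ∧ b < d ∧ B = {a, b} ∧ C = {c, d}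

/-- Two blocks cross: `a < c < b < d` or `c < a < d < b`. -/
def Crosses (B C : Finset ℕ) : Prop := CrossAsym B C ∨ CrossAsym C B

/-- A pairing on `[2n] = {1, …, 2n}`: a partition of `{1, …, 2n}` into blocks of size 2. -/
def IsPairing (n : ℕ) (π : Finset (Finset ℕ)) : Prop :=
  (∀ B ∈ π, B.card = 2 ∧ B ⊆ Finset.Icc 1 (2 * n)) ∧
  (∀ x ∈ Finset.Icc 1 (2 * n), ∃! B, B ∈ π ∧ x ∈ B)

/-- Number of crossings of a pairing: the number of unordered pairs of blocks that cross
(each crossing unordered pair `{B, C}` satisfies the asymmetric condition exactly once). -/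
noncomputable def crNum (π : Finset (Finset ℕ)) : ℕ :=
  Set.ncard {p : Finset ℕ × Finset ℕ | p.1 ∈ π ∧ p.2 ∈ π ∧ CrossAsym p.1 p.2}

/-- A pairing is parity-reversing if each block consists of one odd and one even number. -/
def ParityReversing (π : Finset (Finset ℕ)) : Prop :=
  ∀ B ∈ π, ∃ a b : ℕ, B = {a, b} ∧ Odd a ∧ Even b

/-- A pairing is connected if its blocks cannot be split into two nonempty families
with no crossing between the families. -/
def ConnectedPairing (π : Finset (Finset ℕ)) : Prop :=
  ¬ ∃ S T : Finset (Finset ℕ), S ∪ T = π ∧ Disjoint S T ∧ S.Nonempty ∧ T.Nonempty ∧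
      ∀ B ∈ S, ∀ C ∈ T, ¬ Crosses B C

/-- `tCount n k`: the number of pairings on `[2n]` with exactly `k` crossings. -/
noncomputable def tCount (n k : ℕ) : ℕ :=
  Set.ncard {π : Finset (Finset ℕ) | IsPairing n π ∧ crNum π = k}

/-- `rCount n k`: the number of parity-reversing pairings on `[2n]` with exactly `k` crossings. -/
noncomputable def rCount (n k : ℕ) : ℕ :=
  Set.ncard {π : Finset (Finset ℕ) | IsPairing n π ∧ ParityReversing π ∧ crNum π = k}

/-- `bCount n k`: the number of connected parity-reversing pairings on `[2n]`
with exactly `k` crossings. -/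
noncomputable def bCount (n k : ℕ) : ℕ :=
  Set.ncard {π : Finset (Finset ℕ) |
    IsPairing n π ∧ ParityReversing π ∧ ConnectedPairing π ∧ crNum π = k}

/-- `bTot n`: the number of connected parity-reversing pairings on `[2n]` (equals 1 for `n = 0`). -/
noncomputable def bTot (n : ℕ) : ℕ :=
  Set.ncard {π : Finset (Finset ℕ) |
    IsPairing n π ∧ ParityReversing π ∧ ConnectedPairing π}

/-- The Touchard alternating sum `∑_{k=-n}^n (-1)^k q^{k(k-1)/2} C(2n, n+k)`. -/
noncomputable def touchardSum (n : ℕ) (q : ℂ) : ℂ :=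
  ∑ k ∈ Finset.Icc (-(n : ℤ)) (n : ℤ),
    (-1 : ℂ) ^ k * q ^ ((k * (k - 1)) / 2).toNat * ((2 * n).choose ((n : ℤ) + k).toNat : ℂ)

/-- `T_n(q) = ∑_k t_{n,k} q^k` as a complex polynomial function
(all crossing numbers of pairings on `[2n]` satisfy `k ≤ n*n`). -/
noncomputable def Tpoly (n : ℕ) (q : ℂ) : ℂ :=
  ∑ k ∈ Finset.range (n * n + 1), (tCount n k : ℂ) * q ^ k

/-- `T_n(q) = ∑_k t_{n,k} q^k` as a real polynomial function. -/
noncomputable def TpolyR (n : ℕ) (q : ℝ) : ℝ :=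
  ∑ k ∈ Finset.range (n * n + 1), (tCount n k : ℝ) * q ^ k

/-- `R_n(q) = ∑_k r_{n,k} q^k` as a real polynomial function. -/
noncomputable def RpolyR (n : ℕ) (q : ℝ) : ℝ :=
  ∑ k ∈ Finset.range (n * n + 1), (rCount n k : ℝ) * q ^ k

/-- Non-crossing partitions of `{1, …, 2n}` all of whose blocks have even size. -/
noncomputable def NCEvenPartitions (n : ℕ) : Finset (Finset (Finset ℕ)) :=
  ((Finset.Icc 1 (2 * n)).powerset.powerset).filter (fun π =>
    (∀ B ∈ π, B.Nonempty ∧ Even B.card) ∧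
    (∀ x ∈ Finset.Icc 1 (2 * n), ∃! B, B ∈ π ∧ x ∈ B) ∧
    ¬ ∃ a b c d : ℕ, a < b ∧ b < c ∧ c < d ∧
        ∃ B ∈ π, ∃ C ∈ π, B ≠ C ∧ a ∈ B ∧ c ∈ B ∧ b ∈ C ∧ d ∈ C)

/-!
The crossing graph of a pairing has the blocks as vertices and the crossings as edges. In a
parity-reversing pairing the number of points on one side of a block is even, so every degree is
even. If the pairing is connected with `n ≥ 2` blocks, every degree is therefore at least `2`, and
having only `n` crossings forces every degree to be exactly `2`: the crossing graph is a cycle.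

Deleting a vertex of a cycle together with its two neighbours leaves a connected graph, whereas no
block on one side of a given block crosses a block on the other side. Hence one side of every block
contains no block, only the endpoints of the two blocks that cross it, and the block joins some `p`
to `p + 3` modulo `2 * n`. If the tails `p` of two crossing blocks have opposite parities, they are
cyclically adjacent, and some third block crosses both; then the cycle is a triangle and `n = 3`.
So for `n ≥ 4` all tails have the same parity, either parity gives a pairing, and for `n = 3` the
two choices agree because `p ↦ p + 3` exchanges the ends of a block.
-/

section Graph

variable {V : Type*} {G : SimpleGraph V}

lemma preconnected_iff_exists_adj_compl :
    G.Preconnected ↔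
      ∀ s : Set V, s.Nonempty → sᶜ.Nonempty → ∃ v ∈ s, ∃ w ∉ s, G.Adj v w := by
  constructor
  · rintro hG s ⟨v, hv⟩ ⟨w, hw⟩
    obtain ⟨p⟩ := hG v w
    obtain ⟨d, -, hd, hd'⟩ := p.exists_boundary_dart s hv hw
    exact ⟨d.fst, hd, d.snd, hd', d.adj⟩
  · intro h v w
    by_contra hvw
    obtain ⟨x, hx, y, hy, hxy⟩ := h {x | G.Reachable v x} ⟨v, .rfl⟩ ⟨w, hvw⟩
    exact hy (hx.trans hxy.reachable)

variable [DecidableRel G.Adj]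

lemma even_card_interedges_self (s : Finset V) : Even (G.interedges s s).card := by
  rw [← ZMod.natCast_eq_zero_iff_even, Finset.cast_card]
  refine Finset.sum_involution (fun p _ ↦ p.swap) (fun _ _ ↦ by decide) ?_
    (fun _ hp ↦ G.swap_mem_interedges_iff.2 hp) (fun _ _ ↦ Prod.swap_swap _)
  rintro ⟨v, w⟩ hp - hvw
  exact (G.mk_mem_interedges_iff.1 hp).2.2.ne (congrArg Prod.snd hvw)

lemma card_interedges_union_right [DecidableEq V] (s : Finset V) {t u : Finset V}
    (htu : Disjoint t u) :
    (G.interedges s (t ∪ u)).card = (G.interedges s t).card + (G.interedges s u).card := by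
  rw [← Finset.card_union_of_disjoint (G.interedges_disjoint_right s htu)]
  congr 1
  ext
  simp only [SimpleGraph.mem_interedges_iff, Finset.mem_union]
  tauto

variable [Fintype V]

lemma sum_degree_eq_card_interedges (s : Finset V) :
    ∑ v ∈ s, G.degree v = (G.interedges s Finset.univ).card := by
  rw [SimpleGraph.interedges_def, Finset.card_filter, Finset.sum_product]
  refine Finset.sum_congr rfl fun v _ ↦ ?_
  rw [← Finset.card_filter, ← SimpleGraph.card_neighborFinset_eq_degree,
    SimpleGraph.neighborFinset_eq_filter]

lemma eq_univ_of_isNClique (hG : G.Preconnected) {k : ℕ} (hreg : G.IsRegularOfDegree k)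
    {s : Finset V} (hs : G.IsNClique (k + 1) s) : s = Finset.univ := by
  classical
  by_contra hne
  obtain ⟨v, hv, w, hw, hvw⟩ := preconnected_iff_exists_adj_compl.1 hG s
    (Finset.card_pos.1 (by rw [hs.card_eq]; omega))
    (Set.nonempty_compl.2 (by rwa [Ne, Finset.coe_eq_univ]))
  have hnbr : s.erase v = G.neighborFinset v := by
    refine Finset.eq_of_subset_of_card_le (fun u hu ↦ ?_) ?_
    · rw [SimpleGraph.mem_neighborFinset]
      exact hs.isClique hv (Finset.mem_of_mem_erase hu) (Finset.ne_of_mem_erase hu).symm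
    · rw [Finset.card_erase_of_mem hv, hs.card_eq, G.card_neighborFinset_eq_degree, hreg v]
      simp
  exact hw (Finset.mem_of_mem_erase (hnbr ▸ (G.mem_neighborFinset v w).2 hvw))

variable [DecidableEq V]

lemma even_card_interedges_compl (hG : ∀ v, Even (G.degree v)) (s : Finset V) :
    Even (G.interedges s sᶜ).card := by
  have hsum : Even (∑ v ∈ s, G.degree v) := Finset.even_sum _ fun v _ ↦ hG v
  rw [sum_degree_eq_card_interedges, ← Finset.union_compl s,
    card_interedges_union_right s disjoint_compl_right, Nat.even_add] at hsum
  exact hsum.1 (even_card_interedges_self s)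

lemma two_le_card_interedges_of_adj_mem (hG : G.Preconnected) (heven : ∀ v, Even (G.degree v))
    {s u : Finset V} (hs : s.Nonempty) (hs' : sᶜ.Nonempty)
    (hsu : ∀ v ∈ s, ∀ w ∉ s, G.Adj v w → w ∈ u) : 2 ≤ (G.interedges s u).card := by
  obtain ⟨v, hv, w, hw, hvw⟩ :=
    preconnected_iff_exists_adj_compl.1 hG s hs (by rwa [← Finset.coe_compl])
  have hpos : 0 < (G.interedges s sᶜ).card :=
    Finset.card_pos.2 ⟨(v, w), G.mk_mem_interedges_iff.2 ⟨hv, Finset.mem_compl.2 hw, hvw⟩⟩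
  have hle : (G.interedges s sᶜ).card ≤ (G.interedges s u).card := by
    refine Finset.card_le_card fun p hp ↦ ?_
    obtain ⟨hp₁, hp₂, hadj⟩ := G.mem_interedges_iff.1 hp
    exact G.mem_interedges_iff.2 ⟨hp₁, hsu _ hp₁ _ (Finset.mem_compl.1 hp₂) hadj, hadj⟩
  obtain ⟨k, hk⟩ := even_card_interedges_compl heven s
  omega

lemma two_le_card_interedges_neighborFinset (hG : G.Preconnected)
    (heven : ∀ v, Even (G.degree v)) {b : V} {s t : Finset V} (hs : s.Nonempty)
    (hcover : s ∪ t = (insert b (G.neighborFinset b))ᶜ)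
    (hadj : ∀ v ∈ s, ∀ w ∈ t, ¬G.Adj v w) :
    2 ≤ (G.interedges s (G.neighborFinset b)).card := by
  have mem_iff (v : V) : v ∈ s ∨ v ∈ t ↔ v ≠ b ∧ ¬G.Adj b v := by
    rw [← Finset.mem_union, hcover]
    simp
  refine two_le_card_interedges_of_adj_mem hG heven hs
    ⟨b, Finset.mem_compl.2 fun hb ↦ ((mem_iff b).1 (.inl hb)).1 rfl⟩ fun v hv w hw hvw ↦ ?_
  rw [SimpleGraph.mem_neighborFinset]
  by_contra hbw
  have hwb : w ≠ b := by
    rintro rfl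
    exact ((mem_iff v).1 (.inl hv)).2 hvw.symm
  exact ((mem_iff w).2 ⟨hwb, hbw⟩).elim hw fun hwt ↦ hadj v hv w hwt hvw

-- Otherwise at least two edges join each part to the two neighbours of `b`, which have only
-- two edges left after those to `b`.
lemma eq_empty_or_eq_empty_of_not_adj (hG : G.Preconnected) (hreg : G.IsRegularOfDegree 2) {b : V}
    {s t : Finset V} (hst : Disjoint s t) (hcover : s ∪ t = (insert b (G.neighborFinset b))ᶜ)
    (hadj : ∀ v ∈ s, ∀ w ∈ t, ¬G.Adj v w) : s = ∅ ∨ t = ∅ := by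
  by_contra! hne
  have heven (v : V) : Even (G.degree v) := by rw [hreg v]; exact even_two
  have hs := two_le_card_interedges_neighborFinset hG heven hne.1 hcover hadj
  have ht := two_le_card_interedges_neighborFinset hG heven hne.2
    (Finset.union_comm s t ▸ hcover) fun v hv w hw h ↦ hadj w hw v hv h.symm
  have hb : (G.interedges {b} (G.neighborFinset b)).card = 2 := by
    rw [← hreg b, SimpleGraph.interedges_def, Finset.filter_true_of_mem (by simp)]
    simp
  have hsum : (G.interedges (G.neighborFinset b) ({b} ∪ (s ∪ t))).card ≤ 4 := by
    calc (G.interedges (G.neighborFinset b) ({b} ∪ (s ∪ t))).card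
      _ ≤ (G.interedges (G.neighborFinset b) Finset.univ).card :=
          Finset.card_le_card (G.interedges_mono subset_rfl (Finset.subset_univ _))
      _ = 4 := by simp [← sum_degree_eq_card_interedges, hreg.degree_eq]
  have hcomm (u : Finset V) : (G.interedges (G.neighborFinset b) u).card =
      (G.interedges u (G.neighborFinset b)).card :=
    have := G.symm
    Rel.card_interedges_comm _ _
  have hbst : Disjoint {b} (s ∪ t) := by simp [hcover]
  rw [card_interedges_union_right _ hbst, card_interedges_union_right _ hst,
    hcomm, hcomm, hcomm] at hsum
  omega

end Graph

lemma crossAsym_pair_iff {a b c d : ℕ} (hab : a < b) (hcd : c < d) :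
    CrossAsym {a, b} {c, d} ↔ a < c ∧ c < b ∧ b < d := by
  refine ⟨?_, fun ⟨hac, hcb, hbd⟩ ↦ ⟨a, b, c, d, hac, hcb, hbd, rfl, rfl⟩⟩
  rintro ⟨a', b', c', d', hac, hcb, hbd, h₁, h₂⟩
  simp only [Finset.ext_iff, Finset.mem_insert, Finset.mem_singleton] at h₁ h₂
  have := h₁ a
  have := h₁ b
  have := h₁ a'
  have := h₂ c
  have := h₂ d
  have := h₂ c'
  omega

lemma crosses_pair_iff {a b c d : ℕ} (hab : a < b) (hcd : c < d) :
    Crosses {a, b} {c, d} ↔ (a < c ∧ c < b ∧ b < d) ∨ (c < a ∧ a < d ∧ d < b) := by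
  rw [Crosses, crossAsym_pair_iff hab hcd, crossAsym_pair_iff hcd hab]

lemma crosses_pair_iff_min_max {a b c d : ℕ} (hab : a ≠ b) (hcd : c ≠ d) :
    Crosses {a, b} {c, d} ↔
      (min a b < min c d ∧ min c d < max a b ∧ max a b < max c d) ∨
      (min c d < min a b ∧ min a b < max c d ∧ max c d < max a b) := by
  have pair_eq (x y : ℕ) : ({x, y} : Finset ℕ) = {min x y, max x y} := by
    rcases le_total x y with h | h <;> simp [h, Finset.pair_comm]
  rw [pair_eq a b, pair_eq c d, crosses_pair_iff (by omega) (by omega)]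

lemma CrossAsym.not_crossAsym {B C : Finset ℕ} (h : CrossAsym B C) : ¬CrossAsym C B := by
  obtain ⟨a, b, c, d, hac, hcb, hbd, rfl, rfl⟩ := h
  rw [crossAsym_pair_iff (by omega) (by omega)]
  omega

lemma not_crosses_self (B : Finset ℕ) : ¬Crosses B B :=
  fun h ↦ h.elim (fun h ↦ h.not_crossAsym h) fun h ↦ h.not_crossAsym h

lemma exists_lt_eq_pair {B : Finset ℕ} (hB : B.card = 2) : ∃ a b, a < b ∧ B = {a, b} := by
  obtain ⟨x, y, hxy, rfl⟩ := Finset.card_eq_two.1 hB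
  rcases hxy.lt_or_gt with h | h
  · exact ⟨x, y, h, rfl⟩
  · exact ⟨y, x, h, Finset.pair_comm _ _⟩

section CrossingGraph

/-- The graph on the blocks of `π` in which two blocks are adjacent when they cross. -/
def crossingGraph (π : Finset (Finset ℕ)) : SimpleGraph π where
  Adj B C := Crosses B C
  symm := ⟨fun _ _ ↦ Or.symm⟩
  loopless := ⟨fun B ↦ not_crosses_self B⟩

variable {π : Finset (Finset ℕ)}

lemma crossingGraph_adj {B C : π} : (crossingGraph π).Adj B C ↔ Crosses B C := .rfl

lemma connectedPairing_iff_preconnected : ConnectedPairing π ↔ (crossingGraph π).Preconnected := by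
  rw [preconnected_iff_exists_adj_compl]
  constructor
  · intro hconn s ⟨B, hB⟩ ⟨C, hC⟩
    by_contra! hs
    refine hconn ⟨π.filter fun D ↦ ∃ h : D ∈ π, ⟨D, h⟩ ∈ s,
      π.filter fun D ↦ ¬∃ h : D ∈ π, ⟨D, h⟩ ∈ s,
      Finset.filter_union_filter_not_eq _ _, Finset.disjoint_filter_filter_not _ _ _,
      ⟨B, by simpa using hB⟩, ⟨C, by simpa using hC⟩, fun D hD E hE ↦ ?_⟩
    obtain ⟨-, hDπ, hDs⟩ := Finset.mem_filter.1 hD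
    obtain ⟨hEπ, hEs⟩ := Finset.mem_filter.1 hE
    exact hs ⟨D, hDπ⟩ hDs ⟨E, hEπ⟩ fun h ↦ hEs ⟨hEπ, h⟩
  · rintro hcut ⟨S, T, rfl, hST, ⟨B, hB⟩, ⟨C, hC⟩, hno⟩
    obtain ⟨D, hD, ⟨E, hE⟩, hES, hDE⟩ := hcut {D | D.1 ∈ S}
      ⟨⟨B, Finset.mem_union_left T hB⟩, hB⟩
      ⟨⟨C, Finset.mem_union_right S hC⟩, Finset.disjoint_right.1 hST hC⟩
    exact hno D hD E ((Finset.mem_union.1 hE).resolve_left hES) hDE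

lemma degree_crossingGraph (B : π) :
    (crossingGraph π).degree B = (π.filter (Crosses B)).card := by
  rw [← SimpleGraph.card_neighborFinset_eq_degree, SimpleGraph.neighborFinset_eq_filter,
    Finset.card_filter, Finset.card_filter]
  exact Finset.sum_coe_sort π fun C ↦ if Crosses B C then 1 else 0

lemma sum_degree_crossingGraph (π : Finset (Finset ℕ)) :
    ∑ B, (crossingGraph π).degree B = 2 * crNum π := by
  have crNum_eq : crNum π = ∑ B ∈ π, ∑ C ∈ π, if CrossAsym B C then 1 else 0 := by
    rw [crNum, ← Finset.sum_product', ← Finset.card_filter, ← Set.ncard_coe_finset]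
    congr 1
    ext
    simp [and_assoc]
  calc ∑ B, (crossingGraph π).degree B
    _ = ∑ B ∈ π, ∑ C ∈ π, if Crosses B C then 1 else 0 := by
        simp only [degree_crossingGraph, Finset.card_filter]
        exact Finset.sum_coe_sort π fun B ↦ ∑ C ∈ π, if Crosses B C then 1 else 0
    _ = ∑ B ∈ π, ∑ C ∈ π,
          ((if CrossAsym B C then 1 else 0) + if CrossAsym C B then 1 else 0) := by
        refine Finset.sum_congr rfl fun B _ ↦ Finset.sum_congr rfl fun C _ ↦ ?_
        have : CrossAsym B C → ¬CrossAsym C B := CrossAsym.not_crossAsym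
        by_cases hBC : CrossAsym B C <;> simp_all [Crosses]
    _ = 2 * crNum π := by
        simp only [Finset.sum_add_distrib]
        rw [Finset.sum_comm (f := fun B C ↦ if CrossAsym C B then 1 else 0), crNum_eq, two_mul]

end CrossingGraph

section IsPairing

variable {n : ℕ} {π : Finset (Finset ℕ)}

lemma IsPairing.eq_of_mem (hπ : IsPairing n π) {B C : Finset ℕ} (hB : B ∈ π) (hC : C ∈ π) {x : ℕ}
    (hxB : x ∈ B) (hxC : x ∈ C) : B = C :=
  (hπ.2 x ((hπ.1 B hB).2 hxB)).unique ⟨hB, hxB⟩ ⟨hC, hxC⟩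

lemma IsPairing.sum_card_inter (hπ : IsPairing n π) {I : Finset ℕ}
    (hI : I ⊆ Finset.Icc 1 (2 * n)) : ∑ C ∈ π, (C ∩ I).card = I.card := by
  rw [← Finset.card_biUnion]
  · congr 1
    ext x
    simp only [Finset.mem_biUnion, Finset.mem_inter]
    refine ⟨fun ⟨_, _, _, hx⟩ ↦ hx, fun hx ↦ ?_⟩
    obtain ⟨C, ⟨hC, hxC⟩, -⟩ := hπ.2 x (hI hx)
    exact ⟨C, hC, hxC, hx⟩
  · intro B hB C hC hne
    exact Finset.disjoint_left.2 fun x hxB hxC ↦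
      hne (hπ.eq_of_mem hB hC (Finset.mem_inter.1 hxB).1 (Finset.mem_inter.1 hxC).1)

lemma IsPairing.card_eq (hπ : IsPairing n π) : π.card = n := by
  have hsum : ∑ C ∈ π, (C ∩ Finset.Icc 1 (2 * n)).card = ∑ _C ∈ π, 2 :=
    Finset.sum_congr rfl fun C hC ↦ by
      rw [Finset.inter_eq_left.2 (hπ.1 C hC).2, (hπ.1 C hC).1]
  rw [hπ.sum_card_inter subset_rfl] at hsum
  simp only [Nat.card_Icc, Finset.sum_const, smul_eq_mul] at hsum
  omega

lemma IsPairing.eq_of_subset (hπ : IsPairing n π) {ρ : Finset (Finset ℕ)} (hρ : IsPairing n ρ)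
    (h : π ⊆ ρ) : π = ρ :=
  Finset.eq_of_subset_of_card_le h (by rw [hπ.card_eq, hρ.card_eq])

lemma IsPairing.eq_and_eq_or_ne (hπ : IsPairing n π) {a b c d : ℕ} (hab : a < b) (hcd : c < d)
    (hB : {a, b} ∈ π) (hC : {c, d} ∈ π) :
    (c = a ∧ d = b) ∨ (c ≠ a ∧ c ≠ b ∧ d ≠ a ∧ d ≠ b) := by
  by_cases h : ({a, b} : Finset ℕ) = {c, d}
  · simp only [Finset.ext_iff, Finset.mem_insert, Finset.mem_singleton] at h
    have := h a
    have := h b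
    have := h c
    omega
  · have hdisj {x : ℕ} (hx : x = a ∨ x = b) : ¬(x = c ∨ x = d) := fun hx' ↦
      h (hπ.eq_of_mem hB hC (x := x) (by simpa using hx) (by simpa using hx'))
    have := hdisj (.inl rfl)
    have := hdisj (.inr rfl)
    omega

lemma IsPairing.card_eq_card_crosses_add (hπ : IsPairing n π) {B I : Finset ℕ}
    (hI : I ⊆ Finset.Icc 1 (2 * n)) (hcross : ∀ C ∈ π, Crosses B C ↔ (C ∩ I).card = 1) :
    I.card = (π.filter (Crosses B)).card + 2 * (π.filter (· ⊆ I)).card := by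
  rw [← hπ.sum_card_inter hI, Finset.card_filter, Finset.card_filter, Finset.mul_sum,
    ← Finset.sum_add_distrib]
  refine Finset.sum_congr rfl fun C hC ↦ ?_
  have hle : (C ∩ I).card ≤ 2 := (hπ.1 C hC).1 ▸ Finset.card_le_card Finset.inter_subset_left
  have hsub : C ⊆ I ↔ (C ∩ I).card = 2 := by
    rw [← (hπ.1 C hC).1, ← Finset.inter_eq_left]
    exact ⟨fun h ↦ by rw [h], fun h ↦ Finset.eq_of_subset_of_card_le Finset.inter_subset_left h.ge⟩
  simp only [hcross C hC, hsub]
  split_ifs <;> omega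

end IsPairing

section Sides

/-- The points of `[2n]` outside the chord `{a, b}`; the other side of the chord is `Ioo a b`. -/
def outerPoints (n a b : ℕ) : Finset ℕ := Finset.Icc 1 (2 * n) \ Finset.Icc a b

lemma card_pair_inter {c d : ℕ} (hcd : c ≠ d) (I : Finset ℕ) :
    ({c, d} ∩ I : Finset ℕ).card = (if c ∈ I then 1 else 0) + if d ∈ I then 1 else 0 := by
  rw [← Finset.filter_mem_eq_inter, Finset.card_filter, Finset.sum_pair hcd]

lemma not_crosses_of_subset {n a b : ℕ} {B C : Finset ℕ} (hB : B ⊆ Finset.Ioo a b)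
    (hC : C ⊆ outerPoints n a b) : ¬Crosses B C := by
  rintro (⟨p, q, r, s, hpr, hrq, hqs, rfl, rfl⟩ | ⟨p, q, r, s, -, hrq, hqs, rfl, rfl⟩) <;>
    simp only [outerPoints, Finset.insert_subset_iff, Finset.singleton_subset_iff, Finset.mem_sdiff,
      Finset.mem_Icc, Finset.mem_Ioo] at hB hC <;> omega

variable {n a b : ℕ} {π : Finset (Finset ℕ)}

lemma IsPairing.mem_Icc_of_pair_mem (hπ : IsPairing n π) (hB : {a, b} ∈ π) :
    (1 ≤ a ∧ a ≤ 2 * n) ∧ 1 ≤ b ∧ b ≤ 2 * n := by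
  simpa [Finset.insert_subset_iff] using (hπ.1 _ hB).2

lemma IsPairing.crosses_iff_card_inter_Ioo (hπ : IsPairing n π) (hab : a < b) (hB : {a, b} ∈ π)
    {C : Finset ℕ} (hC : C ∈ π) : Crosses {a, b} C ↔ (C ∩ Finset.Ioo a b).card = 1 := by
  obtain ⟨c, d, hcd, rfl⟩ := exists_lt_eq_pair (hπ.1 C hC).1
  have hcases := hπ.eq_and_eq_or_ne hab hcd hB hC
  rw [crosses_pair_iff hab hcd, card_pair_inter hcd.ne]
  simp only [Finset.mem_Ioo]
  split_ifs <;> omega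

lemma IsPairing.crosses_iff_card_inter_outerPoints (hπ : IsPairing n π) (hab : a < b)
    (hB : {a, b} ∈ π) {C : Finset ℕ} (hC : C ∈ π) :
    Crosses {a, b} C ↔ (C ∩ outerPoints n a b).card = 1 := by
  obtain ⟨c, d, hcd, rfl⟩ := exists_lt_eq_pair (hπ.1 C hC).1
  have hcases := hπ.eq_and_eq_or_ne hab hcd hB hC
  have hC' := hπ.mem_Icc_of_pair_mem hC
  rw [crosses_pair_iff hab hcd, card_pair_inter hcd.ne]
  simp only [outerPoints, Finset.mem_sdiff, Finset.mem_Icc]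
  split_ifs <;> omega

lemma IsPairing.subset_Ioo_or_subset_outerPoints_iff (hπ : IsPairing n π) (hab : a < b)
    (hB : {a, b} ∈ π) {C : Finset ℕ} (hC : C ∈ π) :
    C ⊆ Finset.Ioo a b ∨ C ⊆ outerPoints n a b ↔ C ≠ {a, b} ∧ ¬Crosses {a, b} C := by
  obtain ⟨c, d, hcd, rfl⟩ := exists_lt_eq_pair (hπ.1 C hC).1
  have hcases := hπ.eq_and_eq_or_ne hab hcd hB hC
  have hC' := hπ.mem_Icc_of_pair_mem hC
  have hne : ({c, d} : Finset ℕ) ≠ {a, b} ↔ ¬(c = a ∧ d = b) := by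
    refine not_congr ⟨fun h ↦ ?_, fun ⟨hc, hd⟩ ↦ by rw [hc, hd]⟩
    have hc : c = a ∨ c = b := by simpa [h] using Finset.mem_insert_self c {d}
    omega
  rw [hne, crosses_pair_iff hab hcd]
  simp only [outerPoints, Finset.insert_subset_iff, Finset.singleton_subset_iff, Finset.mem_sdiff,
    Finset.mem_Icc, Finset.mem_Ioo]
  omega

lemma card_outerPoints (ha : 1 ≤ a) (hb : b ≤ 2 * n) :
    (outerPoints n a b).card = 2 * n - (b + 1 - a) := by
  rw [outerPoints, Finset.card_sdiff_of_subset (Finset.Icc_subset_Icc ha hb)]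
  simp

lemma IsPairing.card_Ioo_eq_add (hπ : IsPairing n π) (hab : a < b) (hB : {a, b} ∈ π) :
    (Finset.Ioo a b).card =
      (π.filter (Crosses {a, b})).card + 2 * (π.filter (· ⊆ Finset.Ioo a b)).card := by
  have hB' := hπ.mem_Icc_of_pair_mem hB
  refine hπ.card_eq_card_crosses_add (fun x hx ↦ ?_) fun C ↦ hπ.crosses_iff_card_inter_Ioo hab hB
  rw [Finset.mem_Ioo] at hx
  rw [Finset.mem_Icc]
  omega

lemma IsPairing.card_outerPoints_eq_add (hπ : IsPairing n π) (hab : a < b) (hB : {a, b} ∈ π) :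
    (outerPoints n a b).card =
      (π.filter (Crosses {a, b})).card + 2 * (π.filter (· ⊆ outerPoints n a b)).card :=
  hπ.card_eq_card_crosses_add Finset.sdiff_subset fun _ ↦
    hπ.crosses_iff_card_inter_outerPoints hab hB

lemma IsPairing.filter_subset_eq_empty_or (hπ : IsPairing n π)
    (hconn : (crossingGraph π).Preconnected) (hreg : (crossingGraph π).IsRegularOfDegree 2)
    (hab : a < b) (hB : {a, b} ∈ π) :
    π.filter (· ⊆ Finset.Ioo a b) = ∅ ∨ π.filter (· ⊆ outerPoints n a b) = ∅ := by
  have hsides := eq_empty_or_eq_empty_of_not_adj hconn hreg (b := ⟨{a, b}, hB⟩)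
    (s := Finset.univ.filter fun C ↦ C.1 ⊆ Finset.Ioo a b)
    (t := Finset.univ.filter fun C ↦ C.1 ⊆ outerPoints n a b) ?_ ?_ ?_
  · simpa [Finset.filter_eq_empty_iff] using hsides
  · refine Finset.disjoint_filter.2 fun C _ hin hout ↦ ?_
    obtain ⟨c, hc⟩ := Finset.card_pos.1 ((hπ.1 C C.2).1.symm ▸ two_pos)
    have := hin hc
    have := hout hc
    simp only [outerPoints, Finset.mem_sdiff, Finset.mem_Icc, Finset.mem_Ioo] at *
    omega
  · ext C
    simpa [crossingGraph_adj, Subtype.ext_iff] using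
      hπ.subset_Ioo_or_subset_outerPoints_iff hab hB C.2
  · intro C hC D hD
    exact not_crosses_of_subset (Finset.mem_filter.1 hC).2 (Finset.mem_filter.1 hD).2

lemma ParityReversing.even_degree_crossingGraph (hpar : ParityReversing π) (hπ : IsPairing n π)
    (B : π) : Even ((crossingGraph π).degree B) := by
  obtain ⟨B, hB⟩ := B
  obtain ⟨a, b, hab, rfl⟩ := exists_lt_eq_pair (hπ.1 B hB).1
  have hodd : (a + b) % 2 = 1 := by
    obtain ⟨c, d, hcd, ⟨i, hi⟩, ⟨j, hj⟩⟩ := hpar _ hB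
    simp only [Finset.ext_iff, Finset.mem_insert, Finset.mem_singleton] at hcd
    have := hcd a
    have := hcd b
    have := hcd c
    have := hcd d
    omega
  have hcard := hπ.card_Ioo_eq_add hab hB
  rw [Nat.card_Ioo] at hcard
  rw [degree_crossingGraph, Nat.even_iff]
  dsimp only
  omega

lemma ParityReversing.isRegularOfDegree_two (hpar : ParityReversing π) (hπ : IsPairing n π)
    (hn : 2 ≤ n) (hconn : (crossingGraph π).Preconnected) (hcr : crNum π = n) :
    (crossingGraph π).IsRegularOfDegree 2 := by
  have : Nontrivial π := by
    rw [← Fintype.one_lt_card_iff_nontrivial, Fintype.card_coe, hπ.card_eq]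
    exact hn
  have two_le_degree (B : π) : 2 ≤ (crossingGraph π).degree B := by
    have := hconn.degree_pos_of_nontrivial B
    obtain ⟨k, hk⟩ := hpar.even_degree_crossingGraph hπ B
    omega
  have hsum : ∑ _B : π, 2 = ∑ B, (crossingGraph π).degree B := by
    rw [sum_degree_crossingGraph, hcr, Finset.sum_const, Finset.card_univ, Fintype.card_coe,
      hπ.card_eq, smul_eq_mul, mul_comm]
  intro B
  exact ((Finset.sum_eq_sum_iff_of_le fun B _ ↦ two_le_degree B).1 hsum B (Finset.mem_univ B)).symm

end Sides

section Chord

/-- The point of `[2n]` reached from `p` after `k` steps around the cycle `1, 2, …, 2n, 1`, where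
`p ∈ [2n]` and `k ≤ 2n`. -/
def cyclicShift (n k p : ℕ) : ℕ := if p + k ≤ 2 * n then p + k else p + k - 2 * n

/-- The chord from `p` to the point three steps further around the cycle `1, 2, …, 2n, 1`; we call
`p` its tail. -/
def chord (n p : ℕ) : Finset ℕ := {p, cyclicShift n 3 p}

variable {n p q ε : ℕ} {π : Finset (Finset ℕ)}

lemma cyclicShift_mem {k : ℕ} (hp : p ∈ Finset.Icc 1 (2 * n)) (hk : k ≤ 2 * n) :
    cyclicShift n k p ∈ Finset.Icc 1 (2 * n) := by
  rw [Finset.mem_Icc] at *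
  unfold cyclicShift
  split_ifs <;> omega

lemma cyclicShift_mod_two (n k p : ℕ) : cyclicShift n k p % 2 = (p + k) % 2 := by
  unfold cyclicShift
  split_ifs <;> omega

lemma mem_chord {x : ℕ} : x ∈ chord n p ↔ x = p ∨ x = cyclicShift n 3 p := by
  simp [chord]

lemma crosses_chord_iff (hn : 3 ≤ n) (hp : p ∈ Finset.Icc 1 (2 * n))
    (hq : q ∈ Finset.Icc 1 (2 * n)) :
    Crosses (chord n p) (chord n q) ↔ q = cyclicShift n 1 p ∨ q = cyclicShift n 2 p ∨
      p = cyclicShift n 1 q ∨ p = cyclicShift n 2 q := by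
  rw [Finset.mem_Icc] at hp hq
  have ne_cyclicShift {x : ℕ} : x ≠ cyclicShift n 3 x := by
    unfold cyclicShift
    split_ifs <;> omega
  rw [chord, chord, crosses_pair_iff_min_max ne_cyclicShift ne_cyclicShift]
  unfold cyclicShift
  split_ifs <;> omega

lemma IsPairing.eq_chord (hπ : IsPairing n π) (hconn : (crossingGraph π).Preconnected)
    (hreg : (crossingGraph π).IsRegularOfDegree 2) {B : Finset ℕ} (hB : B ∈ π) :
    ∃ p ∈ Finset.Icc 1 (2 * n), B = chord n p := by
  obtain ⟨a, b, hab, rfl⟩ := exists_lt_eq_pair (hπ.1 B hB).1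
  have hdeg : (π.filter (Crosses {a, b})).card = 2 := by
    rw [← hreg ⟨_, hB⟩, degree_crossingGraph]
  have hmem := hπ.mem_Icc_of_pair_mem hB
  rcases hπ.filter_subset_eq_empty_or hconn hreg hab hB with hempty | hempty
  · have hcard := hπ.card_Ioo_eq_add hab hB
    rw [Nat.card_Ioo, hempty, hdeg, Finset.card_empty] at hcard
    refine ⟨a, Finset.mem_Icc.2 hmem.1, ?_⟩
    rw [chord, cyclicShift, if_pos (by omega), show b = a + 3 by omega]
  · have hcard := hπ.card_outerPoints_eq_add hab hB
    rw [card_outerPoints hmem.1.1 hmem.2.2, hempty, hdeg, Finset.card_empty] at hcard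
    refine ⟨b, Finset.mem_Icc.2 hmem.2, ?_⟩
    rw [chord, cyclicShift, if_neg (by omega), show b + 3 - 2 * n = a by omega, Finset.pair_comm]

/-- The pairing of `[2n]` formed by the chords whose tail is congruent to `ε` modulo `2`. -/
def shiftPairing (n ε : ℕ) : Finset (Finset ℕ) :=
  ((Finset.Icc 1 (2 * n)).filter (· % 2 = ε)).image (chord n)

lemma mem_shiftPairing {B : Finset ℕ} :
    B ∈ shiftPairing n ε ↔ ∃ p ∈ Finset.Icc 1 (2 * n), p % 2 = ε ∧ chord n p = B := by
  simp [shiftPairing, and_assoc]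

lemma chord_mem_shiftPairing (hp : p ∈ Finset.Icc 1 (2 * n)) (hpε : p % 2 = ε) :
    chord n p ∈ shiftPairing n ε :=
  mem_shiftPairing.2 ⟨p, hp, hpε, rfl⟩

lemma eq_of_mem_chord_of_mem_chord {x : ℕ} (hp : p ∈ Finset.Icc 1 (2 * n))
    (hq : q ∈ Finset.Icc 1 (2 * n)) (hpq : p % 2 = q % 2) (hxp : x ∈ chord n p)
    (hxq : x ∈ chord n q) : p = q := by
  rw [Finset.mem_Icc] at hp hq
  rw [mem_chord] at hxp hxq
  unfold cyclicShift at hxp hxq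
  split_ifs at hxp hxq <;> omega

lemma isPairing_shiftPairing (hn : 2 ≤ n) (hε : ε < 2) : IsPairing n (shiftPairing n ε) := by
  constructor
  · intro B hB
    obtain ⟨p, hp, -, rfl⟩ := mem_shiftPairing.1 hB
    have hpn := Finset.mem_Icc.1 hp
    refine ⟨Finset.card_pair ?_, ?_⟩
    · unfold cyclicShift
      split_ifs <;> omega
    · rw [chord, Finset.insert_subset_iff, Finset.singleton_subset_iff]
      exact ⟨hp, cyclicShift_mem hp (by omega)⟩
  · intro x hx
    have exists_tail : ∃ p ∈ Finset.Icc 1 (2 * n), p % 2 = ε ∧ x ∈ chord n p := by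
      by_cases hxε : x % 2 = ε
      · exact ⟨x, hx, hxε, mem_chord.2 (.inl rfl)⟩
      · refine ⟨cyclicShift n (2 * n - 3) x, cyclicShift_mem hx (by omega), ?_, ?_⟩
        · rw [cyclicShift_mod_two]
          omega
        · rw [Finset.mem_Icc] at hx
          rw [mem_chord]
          unfold cyclicShift
          split_ifs <;> omega
    obtain ⟨p, hp, hpε, hxp⟩ := exists_tail
    refine ⟨chord n p, ⟨chord_mem_shiftPairing hp hpε, hxp⟩, ?_⟩
    rintro C ⟨hC, hxC⟩
    obtain ⟨q, hq, hqε, rfl⟩ := mem_shiftPairing.1 hC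
    rw [eq_of_mem_chord_of_mem_chord hq hp (hqε.trans hpε.symm) hxC hxp]

lemma parityReversing_shiftPairing (n ε : ℕ) : ParityReversing (shiftPairing n ε) := by
  intro B hB
  obtain ⟨p, -, -, rfl⟩ := mem_shiftPairing.1 hB
  have := cyclicShift_mod_two n 3 p
  rcases Nat.even_or_odd p with hp | hp
  · refine ⟨_, p, Finset.pair_comm _ _, ?_, hp⟩
    rw [Nat.odd_iff]
    rw [Nat.even_iff] at hp
    omega
  · refine ⟨p, _, rfl, hp, ?_⟩
    rw [Nat.even_iff]
    rw [Nat.odd_iff] at hp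
    omega

lemma filter_crosses_chord (hn : 3 ≤ n) (hp : p ∈ Finset.Icc 1 (2 * n)) (hpε : p % 2 = ε) :
    (shiftPairing n ε).filter (Crosses (chord n p)) =
      {chord n (cyclicShift n 2 p), chord n (cyclicShift n (2 * n - 2) p)} := by
  have hnext := cyclicShift_mem hp (show 2 ≤ 2 * n by omega)
  have hprev := cyclicShift_mem hp (show 2 * n - 2 ≤ 2 * n by omega)
  have hprev_next : p = cyclicShift n 2 (cyclicShift n (2 * n - 2) p) := by
    rw [Finset.mem_Icc] at hp
    unfold cyclicShift
    split_ifs <;> omega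
  ext B
  simp only [Finset.mem_filter, Finset.mem_insert, Finset.mem_singleton]
  constructor
  · rintro ⟨hB, hcross⟩
    obtain ⟨q, hq, hqε, rfl⟩ := mem_shiftPairing.1 hB
    rw [crosses_chord_iff hn hp hq] at hcross
    have hq_eq : q = cyclicShift n 2 p ∨ q = cyclicShift n (2 * n - 2) p := by
      rw [Finset.mem_Icc] at hp hq
      unfold cyclicShift at hcross ⊢
      split_ifs at hcross ⊢ <;> omega
    exact hq_eq.imp (congrArg _) (congrArg _)
  · have := cyclicShift_mod_two n 2 p
    have := cyclicShift_mod_two n (2 * n - 2) p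
    rintro (rfl | rfl)
    · exact ⟨chord_mem_shiftPairing hnext (by omega),
        (crosses_chord_iff hn hp hnext).2 (.inr (.inl rfl))⟩
    · exact ⟨chord_mem_shiftPairing hprev (by omega),
        (crosses_chord_iff hn hp hprev).2 (.inr (.inr (.inr hprev_next)))⟩

lemma isRegularOfDegree_two_shiftPairing (hn : 3 ≤ n) (ε : ℕ) :
    (crossingGraph (shiftPairing n ε)).IsRegularOfDegree 2 := by
  rintro ⟨B, hB⟩
  obtain ⟨p, hp, hpε, rfl⟩ := mem_shiftPairing.1 hB
  rw [degree_crossingGraph, filter_crosses_chord hn hp hpε, Finset.card_pair]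
  have hnext := cyclicShift_mem hp (show 2 ≤ 2 * n by omega)
  have hprev := cyclicShift_mem hp (show 2 * n - 2 ≤ 2 * n by omega)
  intro h
  have heq : cyclicShift n 2 p = cyclicShift n (2 * n - 2) p := by
    refine eq_of_mem_chord_of_mem_chord hnext hprev ?_ (mem_chord.2 (.inl rfl))
      (h ▸ mem_chord.2 (.inl rfl))
    rw [cyclicShift_mod_two, cyclicShift_mod_two]
    omega
  rw [Finset.mem_Icc] at hp
  unfold cyclicShift at heq
  split_ifs at heq <;> omega

lemma crNum_shiftPairing (hn : 3 ≤ n) (hε : ε < 2) : crNum (shiftPairing n ε) = n := by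
  have hsum := sum_degree_crossingGraph (shiftPairing n ε)
  simp only [(isRegularOfDegree_two_shiftPairing hn ε).degree_eq, Finset.sum_const,
    Finset.card_univ, Fintype.card_coe, smul_eq_mul] at hsum
  rw [(isPairing_shiftPairing (by omega) hε).card_eq] at hsum
  omega

lemma preconnected_shiftPairing (hn : 3 ≤ n) (hε : ε < 2) :
    (crossingGraph (shiftPairing n ε)).Preconnected := by
  have mem (k : ℕ) (hk : k < n) :
      2 - ε + 2 * k ∈ Finset.Icc 1 (2 * n) ∧ (2 - ε + 2 * k) % 2 = ε := by
    rw [Finset.mem_Icc]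
    omega
  let v (k : ℕ) (hk : k < n) : shiftPairing n ε :=
    ⟨chord n (2 - ε + 2 * k), chord_mem_shiftPairing (mem k hk).1 (mem k hk).2⟩
  have reachable_v (k : ℕ) (hk : k < n) :
      (crossingGraph (shiftPairing n ε)).Reachable (v 0 (by omega)) (v k hk) := by
    induction k with
    | zero => rfl
    | succ k ih =>
      refine (ih (by omega)).trans (SimpleGraph.Adj.reachable (crossingGraph_adj.2 ?_))
      refine (crosses_chord_iff hn (mem k (by omega)).1 (mem (k + 1) hk).1).2 (.inr (.inl ?_))
      rw [cyclicShift, if_pos (by omega)]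
      ring
  have exists_eq_v (B : shiftPairing n ε) : ∃ k hk, B = v k hk := by
    obtain ⟨B, hB⟩ := B
    obtain ⟨p, hp, hpε, rfl⟩ := mem_shiftPairing.1 hB
    rw [Finset.mem_Icc] at hp
    refine ⟨(p - 1) / 2, by omega, Subtype.ext (congrArg (chord n) ?_)⟩
    omega
  intro B C
  obtain ⟨i, hi, rfl⟩ := exists_eq_v B
  obtain ⟨j, hj, rfl⟩ := exists_eq_v C
  exact (reachable_v i hi).symm.trans (reachable_v j hj)

end Chord

section Classification

variable {n p ε : ℕ} {π : Finset (Finset ℕ)}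

-- Writing `p + k` for `cyclicShift n k p`, the block through `p + 2` has its tail at `p + 2` or
-- `p - 1`, so it crosses both `chord n p` and `chord n (p + 1)`: a connected 2-regular graph
-- containing a triangle has no other vertex.
lemma IsPairing.eq_three_of_chord_mem (hπ : IsPairing n π)
    (hconn : (crossingGraph π).Preconnected) (hreg : (crossingGraph π).IsRegularOfDegree 2)
    (hn : 3 ≤ n) (hp : p ∈ Finset.Icc 1 (2 * n)) (hpπ : chord n p ∈ π)
    (hqπ : chord n (cyclicShift n 1 p) ∈ π) : n = 3 := by
  have hq : cyclicShift n 1 p ∈ Finset.Icc 1 (2 * n) := cyclicShift_mem hp (by omega)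
  obtain ⟨D, ⟨hD, hxD⟩, -⟩ :=
    hπ.2 (cyclicShift n 2 p) (cyclicShift_mem hp (show 2 ≤ 2 * n by omega))
  obtain ⟨r, hr, rfl⟩ := hπ.eq_chord hconn hreg hD
  have hr_cases : r = cyclicShift n 2 p ∨ p = cyclicShift n 1 r := by
    rw [Finset.mem_Icc] at hp hr
    rw [mem_chord] at hxD
    unfold cyclicShift at hxD ⊢
    split_ifs at hxD ⊢ <;> omega
  have hpq : Crosses (chord n p) (chord n (cyclicShift n 1 p)) :=
    (crosses_chord_iff hn hp hq).2 (.inl rfl)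
  have hpr : Crosses (chord n p) (chord n r) := by
    rw [crosses_chord_iff hn hp hr]
    tauto
  have hqr : Crosses (chord n (cyclicShift n 1 p)) (chord n r) := by
    rw [crosses_chord_iff hn hq hr]
    rw [Finset.mem_Icc] at hp hr
    unfold cyclicShift at hr_cases ⊢
    split_ifs at hr_cases ⊢ <;> omega
  have htriangle : (crossingGraph π).IsNClique 3 {⟨_, hpπ⟩, ⟨_, hqπ⟩, ⟨_, hD⟩} :=
    SimpleGraph.is3Clique_triple_iff.2 ⟨hpq, hpr, hqr⟩
  have huniv := eq_univ_of_isNClique hconn hreg htriangle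
  rw [← hπ.card_eq, ← Fintype.card_coe, ← Finset.card_univ, ← huniv, htriangle.card_eq]

lemma chord_three_cyclicShift (hp : p ∈ Finset.Icc 1 6) :
    chord 3 (cyclicShift 3 3 p) = chord 3 p := by
  have hshift : cyclicShift 3 3 (cyclicShift 3 3 p) = p := by
    rw [Finset.mem_Icc] at hp
    unfold cyclicShift
    split_ifs <;> omega
  rw [chord, hshift, chord, Finset.pair_comm]

lemma shiftPairing_three_zero_eq_three_one : shiftPairing 3 0 = shiftPairing 3 1 := by
  decide

lemma IsPairing.mem_shiftPairing_of_crosses (hπ : IsPairing n π)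
    (hconn : (crossingGraph π).Preconnected) (hreg : (crossingGraph π).IsRegularOfDegree 2)
    (hn : 3 ≤ n) {B C : Finset ℕ} (hB : B ∈ π) (hC : C ∈ π) (hBC : Crosses B C)
    (hBε : B ∈ shiftPairing n ε) : C ∈ shiftPairing n ε := by
  obtain ⟨p, hp, hpε, rfl⟩ := mem_shiftPairing.1 hBε
  obtain ⟨q, hq, rfl⟩ := hπ.eq_chord hconn hreg hC
  by_cases hpq : q % 2 = p % 2
  · exact chord_mem_shiftPairing hq (hpq.trans hpε)
  have hstep : q = cyclicShift n 1 p ∨ p = cyclicShift n 1 q := by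
    have := cyclicShift_mod_two n 2 p
    have := cyclicShift_mod_two n 2 q
    rcases (crosses_chord_iff hn hp hq).1 hBC with h | h | h | h
    · exact .inl h
    · omega
    · exact .inr h
    · omega
  obtain rfl : n = 3 := by
    rcases hstep with rfl | rfl
    · exact hπ.eq_three_of_chord_mem hconn hreg hn hp hB hC
    · exact hπ.eq_three_of_chord_mem hconn hreg hn hq hC hB
  rw [← chord_three_cyclicShift hq]
  refine chord_mem_shiftPairing (cyclicShift_mem hq (by omega)) ?_
  rw [cyclicShift_mod_two]
  omega

lemma IsPairing.eq_shiftPairing (hπ : IsPairing n π)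
    (hconn : (crossingGraph π).Preconnected) (hreg : (crossingGraph π).IsRegularOfDegree 2)
    (hn : 3 ≤ n) : π = shiftPairing n 0 ∨ π = shiftPairing n 1 := by
  obtain ⟨B, hB⟩ : π.Nonempty := by
    rw [← Finset.card_pos, hπ.card_eq]
    omega
  obtain ⟨p, hp, rfl⟩ := hπ.eq_chord hconn hreg hB
  have hsub : π ⊆ shiftPairing n (p % 2) := by
    by_contra! h
    obtain ⟨C, hC, hC'⟩ := Finset.not_subset.1 h
    obtain ⟨D, hD, E, hE, hDE⟩ := preconnected_iff_exists_adj_compl.1 hconn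
      {D | D.1 ∈ shiftPairing n (p % 2)} ⟨⟨_, hB⟩, chord_mem_shiftPairing hp rfl⟩ ⟨⟨C, hC⟩, hC'⟩
    exact hE (hπ.mem_shiftPairing_of_crosses hconn hreg hn D.2 E.2 hDE hD)
  have heq := hπ.eq_of_subset (isPairing_shiftPairing (by omega) (Nat.mod_lt p two_pos)) hsub
  rcases Nat.mod_two_eq_zero_or_one p with h | h
  · exact .inl (h ▸ heq)
  · exact .inr (h ▸ heq)

lemma shiftPairing_zero_ne_one (hn : 4 ≤ n) : shiftPairing n 0 ≠ shiftPairing n 1 := by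
  intro h
  have hmem : chord n 1 ∈ shiftPairing n 0 :=
    h ▸ chord_mem_shiftPairing (Finset.mem_Icc.2 (by omega)) rfl
  obtain ⟨p, hp, hp₀, hp₁⟩ := mem_shiftPairing.1 hmem
  have h₁ : 1 ∈ chord n p := hp₁ ▸ mem_chord.2 (.inl rfl)
  have h₄ : cyclicShift n 3 1 ∈ chord n p := hp₁ ▸ mem_chord.2 (.inr rfl)
  rw [Finset.mem_Icc] at hp
  rw [mem_chord] at h₁ h₄
  unfold cyclicShift at h₁ h₄
  split_ifs at h₁ h₄ <;> omega

lemma setOf_connected_parityReversing_eq (hn : 3 ≤ n) :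
    {π | IsPairing n π ∧ ParityReversing π ∧ ConnectedPairing π ∧ crNum π = n} =
      {shiftPairing n 0, shiftPairing n 1} := by
  have mem_of_lt {ε : ℕ} (hε : ε < 2) : IsPairing n (shiftPairing n ε) ∧
      ParityReversing (shiftPairing n ε) ∧ ConnectedPairing (shiftPairing n ε) ∧
      crNum (shiftPairing n ε) = n :=
    ⟨isPairing_shiftPairing (by omega) hε, parityReversing_shiftPairing n ε,
      connectedPairing_iff_preconnected.2 (preconnected_shiftPairing hn hε),
      crNum_shiftPairing hn hε⟩
  ext π
  constructor
  · rintro ⟨hπ, hpar, hconn, hcr⟩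
    rw [connectedPairing_iff_preconnected] at hconn
    exact hπ.eq_shiftPairing hconn (hpar.isRegularOfDegree_two hπ (by omega) hconn hcr) hn
  · rintro (rfl | rfl)
    · exact mem_of_lt two_pos
    · exact mem_of_lt one_lt_two

end Classification

/-- `b_{3,3} = 1`, and `b_{n,n} = 2` for every `n ≥ 4`. -/
theorem bCount_minimal_values :
    bCount 3 3 = 1 ∧ ∀ n : ℕ, 4 ≤ n → bCount n n = 2 := by
  constructor
  · rw [bCount, setOf_connected_parityReversing_eq le_rfl, shiftPairing_three_zero_eq_three_one,
      Set.pair_eq_singleton, Set.ncard_singleton]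
  · intro n hn
    rw [bCount, setOf_connected_parityReversing_eq (by omega),
      Set.ncard_pair (shiftPairing_zero_ne_one hn)]
end

section
/- For every n ≥ 1 and every q ∈ (-1,1), R_n(q) > 0; consequently the function λ_n(q) := (R_n(q))^{1/(2n)} is infinitely differentiable on the open interval (-1,1). -/
open scoped Classical

/-!
Multiplied by `n !`, the sum `R_n(q)` runs over words of length `2n` in which each of `n` labels
occurs once in each of two colours (odd and even positions). Cut such a word in the middle into a
left half `u` and a right half `v`, the latter read from the right end. A crossing either is
visible in `u` alone, or is visible in `v` alone, or is a pair of labels joining the two halves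
whose order in `u` disagrees with their order in `v`. Hence the word has weight `w u * w v * q ^
d`, where `d` is the number of pairs whose orders disagree. For `q ∈ (-1, 1]` the kernel `q ^ d`
is positive semidefinite, since `q ^ [x ≠ y] = (1 + q) / 2 + (1 - q) / 2 * (±1)_x * (±1)_y` for
each pair.

Given the coloured letters that occur in `u`, those of `v` are determined, and because positions
`i` and `2n + 1 - i` have opposite parity a relabelling makes `u` and `v` range over the same set.
So each choice of letters contributes a nonnegative quadratic form, and a choice in which all
chords join the two halves contributes a positive one. For `q > 1` all terms of `R_n(q)` are
positive.
-/

section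

open Finset OrderDual Function

section HammingKernel

variable {ι β : Type*}

theorem pow_card_disagree_eq_sum (q : ℝ) (P : Finset ι) (x y : ι → Prop) :
    q ^ #{p ∈ P | ¬(x p ↔ y p)} =
      ∑ t ∈ P.powerset, ((1 - q) / 2) ^ #t * ((1 + q) / 2) ^ #(P \ t) *
        ((∏ p ∈ t, if x p then 1 else -1) * ∏ p ∈ t, if y p then 1 else -1) := by
  have factor (p : ι) : (if ¬(x p ↔ y p) then q else 1) =
      (1 - q) / 2 * ((if x p then 1 else -1) * if y p then 1 else -1) + (1 + q) / 2 := by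
    by_cases hx : x p <;> by_cases hy : y p <;> simp [hx, hy] <;> ring
  simp_rw [← prod_const, prod_filter, factor, prod_add, prod_mul_distrib]
  exact sum_congr rfl fun t _ => by ring

theorem hammingKernel_eq_sum_sq (q : ℝ) (P : Finset ι) (s : Finset β) (w : β → ℝ)
    (x : β → ι → Prop) :
    ∑ u ∈ s, ∑ v ∈ s, w u * w v * q ^ #{p ∈ P | ¬(x u p ↔ x v p)} =
      ∑ t ∈ P.powerset, ((1 - q) / 2) ^ #t * ((1 + q) / 2) ^ #(P \ t) *
        (∑ u ∈ s, w u * ∏ p ∈ t, if x u p then 1 else -1) ^ 2 := by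
  simp_rw [pow_card_disagree_eq_sum, sq, sum_mul_sum, mul_sum]
  rw [sum_congr rfl fun u _ => sum_comm, sum_comm]
  exact sum_congr rfl fun t _ => sum_congr rfl fun u _ => sum_congr rfl fun v _ => by ring

variable {q : ℝ}

theorem hammingKernel_nonneg (hq : q ∈ Set.Ioc (-1) 1) (P : Finset ι) (s : Finset β) (w : β → ℝ)
    (x : β → ι → Prop) :
    0 ≤ ∑ u ∈ s, ∑ v ∈ s, w u * w v * q ^ #{p ∈ P | ¬(x u p ↔ x v p)} := by
  have h₁ : 0 ≤ (1 - q) / 2 := by linarith [hq.2]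
  have h₂ : 0 ≤ (1 + q) / 2 := by linarith [hq.1]
  rw [hammingKernel_eq_sum_sq]
  positivity

theorem hammingKernel_pos (hq : q ∈ Set.Ioc (-1) 1) (P : Finset ι) {s : Finset β} {w : β → ℝ}
    (x : β → ι → Prop) (hw : ∑ u ∈ s, w u ≠ 0) :
    0 < ∑ u ∈ s, ∑ v ∈ s, w u * w v * q ^ #{p ∈ P | ¬(x u p ↔ x v p)} := by
  have h₁ : 0 ≤ (1 - q) / 2 := by linarith [hq.2]
  have h₂ : 0 < (1 + q) / 2 := by linarith [hq.1]
  rw [hammingKernel_eq_sum_sq]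
  refine sum_pos' (fun t _ => by positivity) ⟨∅, empty_mem_powerset P, ?_⟩
  simp only [card_empty, pow_zero, sdiff_empty, prod_empty, mul_one, one_mul]
  positivity

end HammingKernel

theorem card_filter_eq_card_filter_lt_of_asymm {α : Type*} [LinearOrder α] [Fintype α]
    {R : α → α → Prop} (hR : ∀ l l', R l l' → ¬R l' l) :
    #{p : α × α | R p.1 p.2} = #{p : α × α | p.1 < p.2 ∧ (R p.1 p.2 ∨ R p.2 p.1)} := by
  refine card_bij' (fun p _ => if p.1 < p.2 then p else p.swap)
    (fun p _ => if R p.1 p.2 then p else p.swap) ?_ ?_ ?_ ?_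
  all_goals
    rintro ⟨l, l'⟩
    have := hR l l'
    have := hR l' l
    grind

theorem exists_perm_swap {α : Type*} {s t : Finset α} (hst : Disjoint s t) (h : #s = #t) :
    ∃ ρ : Equiv.Perm α, (∀ l ∉ s, l ∉ t → ρ l = l) ∧ (∀ l ∈ s, ρ l ∈ t) ∧ ∀ l ∈ t, ρ l ∈ s := by
  let e : s ≃ t := equivOfCardEq h
  have hdisj := disjoint_left.1 hst
  let ρ (l : α) : α :=
    if hs : l ∈ s then e ⟨l, hs⟩ else if ht : l ∈ t then e.symm ⟨l, ht⟩ else l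
  have hρ : Involutive ρ := by
    intro l
    by_cases hs : l ∈ s
    · have : (e ⟨l, hs⟩ : α) ∉ s := fun h => hdisj h (e ⟨l, hs⟩).2
      simp [ρ, hs, this]
    · by_cases ht : l ∈ t <;> simp [ρ, hs, ht]
  refine ⟨hρ.toPerm, fun l hs ht => by simp [ρ, hs, ht], fun l hs => by simp [ρ, hs],
    fun l ht => ?_⟩
  have hs : l ∉ s := fun hs => hdisj hs ht
  simp [ρ, hs, ht]

theorem bijective_sumElim_iff {γ δ β : Type*} {f : γ → β} {g : δ → β} :
    Bijective (Sum.elim f g) ↔ Injective f ∧ Injective g ∧ Set.range g = (Set.range f)ᶜ := by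
  have hdisj : (∀ a b, f a ≠ g b) ↔ Disjoint (Set.range f) (Set.range g) := by
    simp [Set.disjoint_range_iff]
  have hcodisj : Surjective (Sum.elim f g) ↔ Codisjoint (Set.range f) (Set.range g) := by
    rw [← Set.range_eq_univ, Set.Sum.elim_range, codisjoint_iff]
    rfl
  rw [Bijective, Sum.elim_injective, hdisj, hcodisj, and_assoc, and_assoc, ← isCompl_iff,
    isCompl_comm, ← eq_compl_iff_isCompl]

section Words

variable {P P' α : Type*} {c : P → Bool} {f : P → α}

/-- A pairing of the positions `P` whose blocks are the fibres of `f`, each block having one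
position of either colour; here the blocks are moreover labelled by `α`. -/
def IsLabelledPairing (c : P → Bool) (f : P → α) : Prop :=
  Bijective fun x => (f x, c x)

/-- The chords `l` and `l'` of the word `f` cross and `l` opens first, so that each crossing pair
of labels is seen in exactly one order. -/
def Interleave [LT P] (f : P → α) (l l' : α) : Prop :=
  ∃ x y z w, x < y ∧ y < z ∧ z < w ∧ f x = l ∧ f y = l' ∧ f z = l ∧ f w = l'

/-- The number of crossings of a word with two occurrences of each label, which is the crossing
number of the pairing it labels. -/
noncomputable def crossings [LT P] [Fintype α] (f : P → α) : ℕ :=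
  #{p : α × α | Interleave f p.1 p.2}

theorem isLabelledPairing_iff :
    IsLabelledPairing c f ↔
      ∀ l, ∃ x y, c x = true ∧ c y = false ∧ ∀ z, f z = l ↔ z = x ∨ z = y := by
  refine ⟨fun hf l => ?_, fun hf => ⟨fun z w h => ?_, ?_⟩⟩
  · obtain ⟨x, hx⟩ := hf.2 (l, true)
    obtain ⟨y, hy⟩ := hf.2 (l, false)
    simp only [Prod.mk.injEq] at hx hy
    refine ⟨x, y, hx.2, hy.2, fun z => ⟨fun hz => ?_, ?_⟩⟩
    · cases hc : c z
      · exact .inr (hf.1 (Prod.ext (hz.trans hy.1.symm) (hc.trans hy.2.symm)))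
      · exact .inl (hf.1 (Prod.ext (hz.trans hx.1.symm) (hc.trans hx.2.symm)))
    · rintro (rfl | rfl)
      exacts [hx.1, hy.1]
  · obtain ⟨x, y, hx, hy, hxy⟩ := hf (f z)
    have := (hxy z).1 rfl
    have := (hxy w).1 (Prod.ext_iff.1 h).1.symm
    have := (Prod.ext_iff.1 h).2
    grind
  · rintro ⟨l, b⟩
    obtain ⟨x, y, hx, hy, hxy⟩ := hf l
    cases b
    · exact ⟨y, Prod.ext ((hxy y).2 (.inr rfl)) hy⟩
    · exact ⟨x, Prod.ext ((hxy x).2 (.inl rfl)) hx⟩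

theorem IsLabelledPairing.surjective (hf : IsLabelledPairing c f) : Surjective f :=
  fun l => (hf.2 (l, true)).imp fun _ hx => (Prod.ext_iff.1 hx).1

theorem isLabelledPairing_comp_equiv (e : P' ≃ P) :
    IsLabelledPairing (c ∘ e) (f ∘ e) ↔ IsLabelledPairing c f :=
  e.bijective_comp fun x => (f x, c x)

theorem interleave_comp_orderIso [Preorder P] [Preorder P'] (e : P' ≃o P) (f : P → α) (l l' : α) :
    Interleave (f ∘ e) l l' ↔ Interleave f l l' := by
  simp only [Interleave, e.surjective.exists, e.lt_iff_lt, comp_apply]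

theorem crossings_comp_orderIso [Preorder P] [Preorder P'] [Fintype α] (e : P' ≃o P) (f : P → α) :
    crossings (f ∘ e) = crossings f := by
  simp only [crossings, interleave_comp_orderIso]

end Words

section HalfWords

variable {I α α' : Type*} {c : I → Bool} {u v : I → α} {l : α} {b : Bool} {A : Set (α × Bool)}

/-- The coloured letters of half of a labelled pairing. -/
def content (c : I → Bool) (u : I → α) : Set (α × Bool) := Set.range fun i => (u i, c i)

/-- The content that the other half of a labelled pairing must have to complete a half of content
`A`. The other half is read from the far end, at whose positions the colours are opposite to those
of the first half, and its content is expressed in the colours of the first half. -/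
def mirrorContent (A : Set (α × Bool)) : Set (α × Bool) := {p | (p.1, !p.2) ∉ A}

/-- The words with given content and without repeated coloured letter, i.e. the possible halves of
a labelled pairing. -/
noncomputable def halfWords [Fintype I] [Fintype α] (c : I → Bool) (A : Set (α × Bool)) :
    Finset (I → α) :=
  {u | Injective (fun i => (u i, c i)) ∧ content c u = A}

/-- The chord `l` has exactly one end in a half of content `A`, so it joins the two halves. -/
def IsPending (A : Set (α × Bool)) (l : α) : Prop := ¬((l, true) ∈ A ↔ (l, false) ∈ A)

theorem mem_mirrorContent : (l, b) ∈ mirrorContent A ↔ (l, !b) ∉ A := Iff.rfl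

theorem mirrorContent_mirrorContent (A : Set (α × Bool)) :
    mirrorContent (mirrorContent A) = A := by
  ext ⟨l, b⟩
  simp [mem_mirrorContent]

theorem content_not (c : I → Bool) (v : I → α) :
    content (fun i => !c i) v = (mirrorContent (content c v))ᶜ := by
  ext ⟨l, b⟩
  simp [content, mirrorContent, ← Bool.eq_not]

theorem ncard_content (hu : Injective fun i => (u i, c i)) : (content c u).ncard = Nat.card I :=
  Set.ncard_range_of_injective hu

theorem isPending_mirrorContent : IsPending (mirrorContent A) l ↔ IsPending A l := by
  simp only [IsPending, mem_mirrorContent, Bool.not_true, Bool.not_false]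
  tauto

variable [Fintype I] [Fintype α]

theorem mem_halfWords :
    u ∈ halfWords c A ↔ Injective (fun i => (u i, c i)) ∧ content c u = A := by
  simp [halfWords]

theorem mem_halfWords_content (hu : Injective u) : u ∈ halfWords c (content c u) :=
  mem_halfWords.2 ⟨fun _ _ h => hu (Prod.ext_iff.1 h).1, rfl⟩

theorem mem_iff_of_mem_halfWords (hu : u ∈ halfWords c A) :
    (l, b) ∈ A ↔ ∃ i, u i = l ∧ c i = b := by
  simp [← (mem_halfWords.1 hu).2, content]

theorem eq_of_mem_halfWords (hu : u ∈ halfWords c A) {i j : I} (h : u i = u j) (hc : c i = c j) :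
    i = j :=
  (mem_halfWords.1 hu).1 (Prod.ext h hc)

theorem isPending_iff_existsUnique (hu : u ∈ halfWords c A) :
    IsPending A l ↔ ∃! i, u i = l := by
  have inj (i j : I) : u i = u j → c i = c j → i = j := eq_of_mem_halfWords hu
  simp only [IsPending, mem_iff_of_mem_halfWords hu]
  constructor
  · intro h
    by_cases ht : ∃ i, u i = l ∧ c i = true
    · obtain ⟨i, rfl, hi⟩ := ht
      exact ⟨i, rfl, fun j hj => by grind⟩
    · obtain ⟨i, rfl, hi⟩ : ∃ i, u i = l ∧ c i = false := by tauto
      exact ⟨i, rfl, fun j hj => by grind⟩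
  · rintro ⟨i, rfl, hi⟩
    grind

theorem isPending_of_eq (hu : u ∈ halfWords c A) (hv : v ∈ halfWords c (mirrorContent A))
    {i j : I} (h : u i = v j) : IsPending A (u i) := by
  have hi := (mem_iff_of_mem_halfWords hu).2 ⟨i, rfl, rfl⟩
  have hj := (mem_iff_of_mem_halfWords hv).2 ⟨j, h.symm, rfl⟩
  rw [mem_mirrorContent] at hj
  cases hci : c i <;> cases hcj : c j <;> simp_all [IsPending]

theorem exists_ne_eq_or_exists_eq (hu : u ∈ halfWords c A) (hv : v ∈ halfWords c (mirrorContent A))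
    (i : I) : (∃ j ≠ i, u j = u i) ∨ ∃ j, v j = u i := by
  by_cases h : (u i, !c i) ∈ A
  · obtain ⟨j, hj, hcj⟩ := (mem_iff_of_mem_halfWords hu).1 h
    exact .inl ⟨j, by rintro rfl; simp at hcj, hj⟩
  · obtain ⟨j, hj, -⟩ := (mem_iff_of_mem_halfWords hv).1 (mem_mirrorContent.2 h)
    exact .inr ⟨j, hj⟩

theorem eq_or_eq_of_mem_halfWords (hu : u ∈ halfWords c A) {i j k : I} (hij : i ≠ j)
    (h : u i = u j) (hk : u k = u i) : k = i ∨ k = j := by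
  have inj (i j : I) : u i = u j → c i = c j → i = j := eq_of_mem_halfWords hu
  have : c i ≠ c j := fun hc => hij (inj i j h hc)
  cases hci : c i <;> cases hcj : c j <;> cases hck : c k <;> grind

theorem sum_halfWords_relabel {M : Type*} [AddCommMonoid M] [Fintype α'] {B : Set (α' × Bool)}
    (ρ : α ≃ α') (hρ : ∀ l b, (ρ l, b) ∈ B ↔ (l, b) ∈ A) (g : (I → α') → M) :
    ∑ v ∈ halfWords c B, g v = ∑ v ∈ halfWords c A, g (ρ ∘ v) := by
  refine (sum_equiv ((Equiv.refl I).arrowCongr ρ) (fun v => ?_) fun v _ => rfl).symm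
  have hcontent : content c (ρ ∘ v) = B ↔ content c v = A := by
    simp only [Set.ext_iff, Prod.forall, ρ.surjective.forall, hρ]
    simp [content]
  change _ ↔ ρ ∘ v ∈ _
  rw [mem_halfWords, mem_halfWords, hcontent]
  simp [Injective]

/-- Swapping the labels with two ends in a half with those with none turns its content into the
mirror content. -/
theorem exists_perm_mirrorContent (hA : A.ncard = Fintype.card α) :
    ∃ ρ : Equiv.Perm α, (∀ l, IsPending A l → ρ l = l) ∧
      ∀ l b, (ρ l, b) ∈ mirrorContent A ↔ (l, b) ∈ A := by
  let S : Finset α := {l | (l, true) ∈ A}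
  let T : Finset α := {l | (l, false) ∈ A}
  have hST : #S + #T = Fintype.card α := by
    rw [← hA, Set.ncard_eq_toFinset_card', ← filter_univ_mem A.toFinset]
    simp only [S, T, card_filter, Set.mem_toFinset, Fintype.sum_prod_type, Fintype.sum_bool,
      sum_add_distrib]
  have hcard : #(S ∩ T) = #(S ∪ T)ᶜ := by
    have := card_union_add_card_inter S T
    rw [card_compl]
    omega
  obtain ⟨ρ, hfix, hclosed, hfree⟩ := exists_perm_swap
    (disjoint_compl_right.mono_left <| inter_subset_left.trans subset_union_left) hcard
  simp only [S, T, mem_inter, mem_compl, mem_union, mem_filter_univ, not_or] at hfix hclosed hfree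
  refine ⟨ρ, fun l hl => hfix l (by grind [IsPending]) (by grind [IsPending]), fun l b => ?_⟩
  rw [mem_mirrorContent]
  have := hfix l
  have := hclosed l
  have := hfree l
  cases b <;> grind

end HalfWords

section HalfCrossings

variable {I α α' : Type*} {u : I → α} {ρ : α → α'} {l l' : α}

/-- The label `l` occurs before `l'`; this orders the labels that occur just once in `u`. -/
def Precedes [LT I] (u : I → α) (l l' : α) : Prop := ∃ i j, i < j ∧ u i = l ∧ u j = l'

/-- The chord `l` is closed within `u` while `l'`, opened between the ends of `l`, remains open.
This is a crossing whether `l'` is closed later in `u` or in the other half of the word. -/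
def ClosesAcross [LT I] (u : I → α) (l l' : α) : Prop :=
  ∃ i j k, i < j ∧ j < k ∧ u i = l ∧ u j = l' ∧ u k = l ∧ ∀ m, u m = l' → m = j ∨ k < m

/-- The number of crossings of a word that are already determined by its half `u`. -/
noncomputable def halfCrossings [LT I] [Fintype α] (u : I → α) : ℕ :=
  #{p : α × α | ClosesAcross u p.1 p.2}

theorem precedes_asymm [Preorder I] (hl : ∃! i, u i = l) (hl' : ∃! i, u i = l')
    (h : Precedes u l l') : ¬Precedes u l' l := by
  rintro ⟨i', j', hij', hi', hj'⟩
  obtain ⟨i, j, hij, hi, hj⟩ := h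
  rw [hl.unique hj' hi, hl'.unique hi' hj] at hij'
  exact lt_asymm hij hij'

theorem precedes_swap_iff_not [LinearOrder I] (hl : ∃! i, u i = l) (hl' : ∃! i, u i = l')
    (hne : l ≠ l') : Precedes u l' l ↔ ¬Precedes u l l' := by
  refine ⟨precedes_asymm hl' hl, fun h => ?_⟩
  obtain ⟨i, hi, -⟩ := hl
  obtain ⟨j, hj, -⟩ := hl'
  have hij : i ≠ j := by rintro rfl; exact hne (hi.symm.trans hj)
  exact hij.lt_or_gt.elim (fun hlt => (h ⟨i, j, hlt, hi, hj⟩).elim) fun hgt => ⟨j, i, hgt, hj, hi⟩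

variable [LT I]

theorem precedes_comp (hρ : Injective ρ) : Precedes (ρ ∘ u) (ρ l) (ρ l') ↔ Precedes u l l' := by
  simp only [Precedes, comp_apply, hρ.eq_iff]

theorem closesAcross_comp (hρ : Injective ρ) :
    ClosesAcross (ρ ∘ u) (ρ l) (ρ l') ↔ ClosesAcross u l l' := by
  simp only [ClosesAcross, comp_apply, hρ.eq_iff]

theorem halfCrossings_comp_equiv [Fintype α] [Fintype α'] (ρ : α ≃ α') (u : I → α) :
    halfCrossings (ρ ∘ u) = halfCrossings u :=
  (card_equiv (ρ.prodCongr ρ) fun p => by simp [closesAcross_comp ρ.injective]).symm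

end HalfCrossings

section MirrorWords

variable {I α : Type*} {c : I → Bool} {u v : I → α} {l l' : α} {A : Set (α × Bool)}

/-- The word with left half `u` and right half `v`, with `v` read from the right end inwards. -/
def mirrorWord (u v : I → α) (x : I ⊕ₗ Iᵒᵈ) : α :=
  Sum.elim u (v ∘ ofDual) (ofLex x)

@[simp]
theorem mirrorWord_inl (u v : I → α) (i : I) : mirrorWord u v (toLex (.inl i)) = u i := rfl

@[simp]
theorem mirrorWord_inr (u v : I → α) (i : I) :
    mirrorWord u v (toLex (.inr (toDual i))) = v i := rfl

variable [Fintype I] [Fintype α]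

theorem isLabelledPairing_mirrorWord :
    IsLabelledPairing (mirrorWord c fun i => !c i) (mirrorWord u v) ↔
      u ∈ halfWords c (content c u) ∧ v ∈ halfWords c (mirrorContent (content c u)) := by
  have hsplit : (fun x => (mirrorWord u v x, mirrorWord c (fun i => !c i) x)) =
      Sum.elim (fun i => (u i, c i)) (fun i => (v (ofDual i), !c (ofDual i))) ∘ ofLex := by
    ext x <;> rcases x with i | i <;> rfl
  rw [IsLabelledPairing, hsplit, ofLex.bijective.of_comp_iff, bijective_sumElim_iff]
  have hcontent : (Set.range fun i => (v (ofDual i), !c (ofDual i))) = (content c u)ᶜ ↔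
      content c v = mirrorContent (content c u) := by
    change content (fun i => !c i) v = _ ↔ _
    rw [content_not, compl_inj_iff, eq_comm]
    exact ⟨fun h => by rw [h, mirrorContent_mirrorContent],
      fun h => by rw [h, mirrorContent_mirrorContent]⟩
  rw [mem_halfWords, mem_halfWords, ← hcontent]
  simp [Injective, content]

theorem sum_isLabelledPairing_mirrorWord [DecidableEq (I ⊕ₗ Iᵒᵈ)] {M : Type*}
    [AddCommMonoid M] (g : (I ⊕ₗ Iᵒᵈ → α) → M) :
    ∑ f with IsLabelledPairing (mirrorWord c fun i => !c i) f, g f =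
      ∑ A : Set (α × Bool), ∑ u ∈ halfWords c A, ∑ v ∈ halfWords c (mirrorContent A),
        g (mirrorWord u v) := by
  let left (f : I ⊕ₗ Iᵒᵈ → α) (i : I) : α := f (toLex (.inl i))
  let right (f : I ⊕ₗ Iᵒᵈ → α) (i : I) : α := f (toLex (.inr (toDual i)))
  have split (f : I ⊕ₗ Iᵒᵈ → α) : mirrorWord (left f) (right f) = f := by
    ext (i | i) <;> rfl
  rw [← sum_fiberwise _ fun f => content c (left f)]
  refine sum_congr rfl fun A _ => ?_
  rw [← sum_product']
  refine sum_nbij' (fun f => (left f, right f)) (fun p => mirrorWord p.1 p.2) (fun f hf => ?_)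
    (fun p hp => ?_) (fun f _ => split f) (fun _ _ => rfl) fun f _ => by rw [split]
  · obtain ⟨hpairing, rfl⟩ := mem_filter.1 hf
    rw [mem_filter_univ, ← split f, isLabelledPairing_mirrorWord] at hpairing
    exact mem_product.2 hpairing
  · obtain ⟨hu, hv⟩ := mem_product.1 hp
    obtain ⟨-, rfl⟩ := mem_halfWords.1 hu
    exact mem_filter.2 ⟨(mem_filter_univ _).2 (isLabelledPairing_mirrorWord.2 ⟨hu, hv⟩), rfl⟩

section Preorder

variable [Preorder I]

theorem closesAcross_iff (hu : u ∈ halfWords c A) (hv : v ∈ halfWords c (mirrorContent A)) :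
    ClosesAcross u l l' ↔ ∃ i j k, i < j ∧ j < k ∧ u i = l ∧ u j = l' ∧ u k = l ∧
      ((∃ m, k < m ∧ u m = l') ∨ ∃ m, v m = l') := by
  refine exists₃_congr fun i j k => and_congr_right fun _ => and_congr_right fun hjk =>
    and_congr_right fun _ => and_congr_right fun hj => and_congr_right fun _ => ?_
  subst hj
  constructor
  · intro hclose
    refine (exists_ne_eq_or_exists_eq hu hv j).imp_left ?_
    rintro ⟨m, hmj, hm⟩
    exact ⟨m, (hclose m hm).resolve_left hmj, hm⟩
  · rintro (⟨m, hkm, hm⟩ | ⟨m, hm⟩) m' hm'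
    · exact (eq_or_eq_of_mem_halfWords hu (hjk.trans hkm).ne hm.symm hm').imp_right
        fun h => (h.trans_gt hkm)
    · exact .inl (((isPending_iff_existsUnique hu).1 (isPending_of_eq hu hv hm.symm)).unique
        hm' rfl)

theorem interleave_mirrorWord_iff (hu : u ∈ halfWords c A)
    (hv : v ∈ halfWords c (mirrorContent A)) :
    Interleave (mirrorWord u v) l l' ↔
      ClosesAcross u l l' ∨ ClosesAcross v l' l ∨ Precedes u l l' ∧ Precedes v l' l := by
  rw [closesAcross_iff hu hv, closesAcross_iff hv (by rwa [mirrorContent_mirrorContent])]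
  simp only [Interleave, exists_and_left, Lex.exists, Sum.exists, mirrorWord_inl, OrderDual.exists,
    mirrorWord_inr, Sum.Lex.toLex_lt_toLex, Sum.lex_inl_inl, Sum.Lex.sep, true_and,
    Sum.lex_inr_inl, false_and, exists_false, Sum.lex_inr_inr, false_or, toDual_lt_toDual, Precedes]
  constructor <;> grind


theorem not_isPending_of_closesAcross (hu : u ∈ halfWords c A) (h : ClosesAcross u l l') :
    ¬IsPending A l := by
  obtain ⟨i, j, k, hij, hjk, hi, -, hk, -⟩ := h
  exact fun hl => (hij.trans hjk).ne (((isPending_iff_existsUnique hu).1 hl).unique hi hk)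

theorem halfCrossings_eq_zero_of_injective {u₀ : I → α} (hu₀ : Injective u₀)
    (hu : u ∈ halfWords c (content c u₀)) : halfCrossings u = 0 := by
  have hu₀' : u₀ ∈ halfWords c (content c u₀) := mem_halfWords_content hu₀
  refine card_eq_zero.2 (filter_eq_empty_iff.2 fun p _ h => not_isPending_of_closesAcross hu h ?_)
  obtain ⟨i, -, -, -, -, hi, -⟩ := h
  obtain ⟨k, hk, -⟩ := (mem_iff_of_mem_halfWords hu₀').1
    ((mem_iff_of_mem_halfWords hu).2 ⟨i, hi, rfl⟩)
  exact (isPending_iff_existsUnique hu₀').2 ⟨k, hk, fun j hj => hu₀ (hj.trans hk.symm)⟩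

end Preorder

section LinearOrder

variable [LinearOrder I]

/-- The pairs of labels whose order in the two halves of a word decides whether their chords
cross. The order on `α` only serves to list each pair once. -/
noncomputable def pendingPairs [LinearOrder α] (A : Set (α × Bool)) : Finset (α × α) :=
  {p | p.1 < p.2 ∧ IsPending A p.1 ∧ IsPending A p.2}

theorem card_precedes_inversions [LinearOrder α] (hu : u ∈ halfWords c A)
    (hv : v ∈ halfWords c (mirrorContent A)) :
    #{p : α × α | Precedes u p.1 p.2 ∧ Precedes v p.2 p.1} =
      #{p ∈ pendingPairs A | ¬(Precedes u p.1 p.2 ↔ Precedes v p.1 p.2)} := by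
  have unique_u {l} : IsPending A l → ∃! i, u i = l := (isPending_iff_existsUnique hu).1
  have unique_v {l} (h : IsPending A l) : ∃! i, v i = l :=
    (isPending_iff_existsUnique hv).1 (isPending_mirrorContent.2 h)
  have pending {l l'} (h : Precedes u l l' ∧ Precedes v l' l) : IsPending A l ∧ IsPending A l' := by
    obtain ⟨⟨i, j, -, rfl, rfl⟩, i', j', -, hi', hj'⟩ := h
    exact ⟨isPending_of_eq hu hv hj'.symm, isPending_of_eq hu hv hi'.symm⟩
  refine (Eq.trans (by congr!) (card_filter_eq_card_filter_lt_of_asymm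
    (R := fun l l' => Precedes u l l' ∧ Precedes v l' l) fun l l' h h' =>
      precedes_asymm (unique_u (pending h).1) (unique_u (pending h).2) h.1 h'.1)).trans ?_
  rw [pendingPairs, filter_filter]
  congr 1
  ext ⟨l, l'⟩
  simp only [mem_filter_univ, and_assoc]
  refine and_congr_right fun hlt => ?_
  by_cases hp : IsPending A l ∧ IsPending A l'
  · rw [precedes_swap_iff_not (unique_u hp.1) (unique_u hp.2) hlt.ne,
      precedes_swap_iff_not (unique_v hp.1) (unique_v hp.2) hlt.ne]
    tauto
  · have := @pending l l'
    have := @pending l' l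
    tauto

theorem crossings_mirrorWord [LinearOrder α] (hu : u ∈ halfWords c A)
    (hv : v ∈ halfWords c (mirrorContent A)) :
    crossings (mirrorWord u v) = halfCrossings u + halfCrossings v +
      #{p ∈ pendingPairs A | ¬(Precedes u p.1 p.2 ↔ Precedes v p.1 p.2)} := by
  have hswap : #{p : α × α | ClosesAcross v p.2 p.1} = halfCrossings v :=
    card_equiv (Equiv.prodComm α α) (by simp)
  have not_closes_u {l l'} (h : ClosesAcross u l l') {j} (hj : v j = l) : False := by
    obtain ⟨i, -, -, -, -, hi, -⟩ := id h
    exact not_isPending_of_closesAcross hu h (hi ▸ isPending_of_eq hu hv (hi.trans hj.symm))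
  have not_closes_v {l l'} (h : ClosesAcross v l l') {j} (hj : u j = l) : False := by
    obtain ⟨i, -, -, -, -, hi, -⟩ := id h
    exact not_isPending_of_closesAcross hv h
      (isPending_mirrorContent.2 (hj ▸ isPending_of_eq hu hv (hj.trans hi.symm)))
  simp only [crossings, interleave_mirrorWord_iff hu hv, filter_or]
  rw [card_union_of_disjoint, card_union_of_disjoint, hswap, card_precedes_inversions hu hv,
    add_assoc]
  · rfl
  · refine disjoint_filter.2 fun p _ h h' => ?_
    obtain ⟨⟨-, j, -, -, hj⟩, -⟩ := h'
    exact not_closes_v h hj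
  · refine disjoint_union_right.2 ⟨disjoint_filter.2 fun p _ h h' => ?_,
      disjoint_filter.2 fun p _ h h' => ?_⟩
    · obtain ⟨-, j, -, -, -, -, hj, -⟩ := h'
      exact not_closes_u h hj
    · obtain ⟨-, -, j, -, -, hj⟩ := h'
      exact not_closes_u h hj

theorem sum_pow_crossings_mirrorWord [LinearOrder α] (hA : A.ncard = Fintype.card α) (q : ℝ) :
    ∑ u ∈ halfWords c A, ∑ v ∈ halfWords c (mirrorContent A), q ^ crossings (mirrorWord u v) =
      ∑ u ∈ halfWords c A, ∑ v ∈ halfWords c A, q ^ halfCrossings u * q ^ halfCrossings v *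
        q ^ #{p ∈ pendingPairs A | ¬(Precedes u p.1 p.2 ↔ Precedes v p.1 p.2)} := by
  obtain ⟨ρ, hfix, hρ⟩ := exists_perm_mirrorContent hA
  refine sum_congr rfl fun u hu => ?_
  rw [sum_congr rfl fun v hv => by rw [crossings_mirrorWord hu hv], sum_halfWords_relabel ρ hρ]
  refine sum_congr rfl fun v _ => ?_
  have hprec : ∀ p ∈ pendingPairs A, Precedes (ρ ∘ v) p.1 p.2 ↔ Precedes v p.1 p.2 := by
    intro p hp
    obtain ⟨-, h₁, h₂⟩ := (mem_filter.1 hp).2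
    rw [← precedes_comp ρ.injective (u := v), hfix _ h₁, hfix _ h₂]
  rw [halfCrossings_comp_equiv, pow_add, pow_add,
    filter_congr fun p hp => by rw [hprec p hp]]

theorem sum_pow_crossings_pos (hI : Fintype.card I = Fintype.card α) {q : ℝ}
    (hq : q ∈ Set.Ioc (-1) 1) (c : I → Bool) :
    0 < ∑ f : I ⊕ₗ Iᵒᵈ → α with IsLabelledPairing (mirrorWord c fun i => !c i) f,
      q ^ crossings f := by
  let _ : LinearOrder α := LinearOrder.lift' _ (Fintype.equivFin α).injective
  have ncard_eq {A} {u : I → α} (hu : u ∈ halfWords c A) : A.ncard = Fintype.card α := by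
    obtain ⟨hinj, rfl⟩ := mem_halfWords.1 hu
    rw [ncard_content hinj, Nat.card_eq_fintype_card, hI]
  rw [sum_isLabelledPairing_mirrorWord]
  let u₀ : I ≃ α := Fintype.equivOfCardEq hI
  have hu₀ : ⇑u₀ ∈ halfWords c (content c u₀) := mem_halfWords_content u₀.injective
  refine sum_pos' (fun A _ => ?_) ⟨content c u₀, mem_univ _, ?_⟩
  · obtain hA | ⟨u, hu⟩ := (halfWords c A).eq_empty_or_nonempty
    · rw [hA, sum_empty]
    · rw [sum_pow_crossings_mirrorWord (ncard_eq hu)]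
      exact hammingKernel_nonneg hq (pendingPairs A) (halfWords c A)
        (fun u => q ^ halfCrossings u) fun u p => Precedes u p.1 p.2
  · rw [sum_pow_crossings_mirrorWord (ncard_eq hu₀)]
    refine hammingKernel_pos hq (pendingPairs _) (w := fun u => q ^ halfCrossings u)
      (fun u p => Precedes u p.1 p.2) (ne_of_gt <| sum_pos (fun u hu => ?_) ⟨u₀, hu₀⟩)
    rw [halfCrossings_eq_zero_of_injective u₀.injective hu, pow_zero]
    exact one_pos

end LinearOrder

end MirrorWords

section Blocks

variable {α : Type*} {s : Finset ℕ} {f : s → α} {l l' : α}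

/-- The colouring of positions for which a labelled pairing is a parity-reversing one. -/
def oddColour (s : Finset ℕ) (x : s) : Bool := decide (Odd x.1)

/-- The block of positions labelled `l`, in the encoding of `IsPairing`. -/
noncomputable def block (f : s → α) (l : α) : Finset ℕ :=
  ({x | f x = l} : Finset s).map (Embedding.subtype _)

theorem mem_block {a : ℕ} : a ∈ block f l ↔ ∃ h : a ∈ s, f ⟨a, h⟩ = l := by
  simp [block]

theorem coe_mem_block {x : s} : x.1 ∈ block f l ↔ f x = l := by
  simp [mem_block]

theorem block_subset : block f l ⊆ s := fun _ ha => (mem_block.1 ha).1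

theorem block_injective (hf : Surjective f) : Injective (block f) := by
  intro l l' h
  obtain ⟨x, rfl⟩ := hf l
  exact coe_mem_block.1 (h ▸ coe_mem_block.2 rfl)

theorem crossAsym_block_iff (hl : #(block f l) = 2) (hl' : #(block f l') = 2) :
    CrossAsym (block f l) (block f l') ↔ Interleave f l l' := by
  have block_eq {l} (hl : #(block f l) = 2) {x y : s} (hx : f x = l) (hy : f y = l)
      (hxy : x < y) : block f l = {x.1, y.1} := by
    have hpair : #({x.1, y.1} : Finset ℕ) = 2 := card_pair (Subtype.val_injective.ne hxy.ne)
    refine (eq_of_subset_of_card_le ?_ (hl.trans hpair.symm).le).symm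
    simp [insert_subset_iff, coe_mem_block, hx, hy]
  constructor
  · rintro ⟨a, b, c, d, hac, hcb, hbd, hB, hC⟩
    obtain ⟨ha, hfa⟩ := mem_block.1 (hB ▸ mem_insert_self a {b})
    obtain ⟨hb, hfb⟩ := mem_block.1 (hB ▸ mem_insert_of_mem (mem_singleton_self b))
    obtain ⟨hc, hfc⟩ := mem_block.1 (hC ▸ mem_insert_self c {d})
    obtain ⟨hd, hfd⟩ := mem_block.1 (hC ▸ mem_insert_of_mem (mem_singleton_self d))
    exact ⟨⟨a, ha⟩, ⟨c, hc⟩, ⟨b, hb⟩, ⟨d, hd⟩, hac, hcb, hbd, hfa, hfc, hfb, hfd⟩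
  · rintro ⟨x, y, z, w, hxy, hyz, hzw, hx, hy, hz, hw⟩
    exact ⟨x, z, y, w, hxy, hyz, hzw, block_eq hl hx hz (hxy.trans hyz),
      block_eq hl' hy hw (hyz.trans hzw)⟩

variable [Fintype α]

/-- The set partition of the positions into the blocks labelled by `f`, in the encoding of
`IsPairing`. -/
noncomputable def blocks (f : s → α) : Finset (Finset ℕ) := univ.image (block f)

theorem mem_blocks {B : Finset ℕ} : B ∈ blocks f ↔ ∃ l, block f l = B := by
  simp [blocks]

theorem parityReversing_blocks_iff :
    ParityReversing (blocks f) ↔ IsLabelledPairing (oddColour s) f := by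
  simp only [ParityReversing, mem_blocks, forall_exists_index, forall_apply_eq_imp_iff,
    isLabelledPairing_iff, oddColour, decide_eq_true_eq, decide_eq_false_iff_not,
    Nat.not_odd_iff_even]
  refine forall_congr' fun l => ⟨?_, ?_⟩
  · rintro ⟨a, b, hB, ha, hb⟩
    obtain ⟨ha', -⟩ := mem_block.1 (hB ▸ mem_insert_self a {b})
    obtain ⟨hb', -⟩ := mem_block.1 (hB ▸ mem_insert_of_mem (mem_singleton_self b))
    refine ⟨⟨a, ha'⟩, ⟨b, hb'⟩, ha, hb, fun z => ?_⟩
    rw [← coe_mem_block, hB, mem_insert, mem_singleton, Subtype.ext_iff, Subtype.ext_iff]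
  · rintro ⟨x, y, hx, hy, hxy⟩
    refine ⟨x, y, ?_, hx, hy⟩
    ext a
    simp only [mem_block, hxy, mem_insert, mem_singleton, Subtype.ext_iff]
    grind

theorem card_eq_two_of_parityReversing {π : Finset (Finset ℕ)} (hπ : ParityReversing π)
    {B : Finset ℕ} (hB : B ∈ π) : #B = 2 := by
  obtain ⟨a, b, rfl, ha, hb⟩ := hπ B hB
  exact card_pair fun h => Nat.not_even_iff_odd.2 ha (h ▸ hb)

theorem crNum_blocks (hf : IsLabelledPairing (oddColour s) f) :
    crNum (blocks f) = crossings f := by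
  have hinj := block_injective hf.surjective
  have hcard (l) : #(block f l) = 2 :=
    card_eq_two_of_parityReversing (parityReversing_blocks_iff.2 hf) (mem_blocks.2 ⟨l, rfl⟩)
  have himage :
      {p : Finset ℕ × Finset ℕ | p.1 ∈ blocks f ∧ p.2 ∈ blocks f ∧ CrossAsym p.1 p.2} =
        Prod.map (block f) (block f) '' ({p | Interleave f p.1 p.2} : Finset (α × α)) := by
    ext ⟨B, C⟩
    simp only [mem_blocks, Set.mem_ofPred_eq, Set.mem_image, coe_filter_univ, Prod.exists]
    constructor
    · rintro ⟨⟨l, rfl⟩, ⟨l', rfl⟩, h⟩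
      exact ⟨l, l', (crossAsym_block_iff (hcard l) (hcard l')).1 h, rfl⟩
    · rintro ⟨l, l', h, ⟨⟩⟩
      exact ⟨⟨l, rfl⟩, ⟨l', rfl⟩, (crossAsym_block_iff (hcard l) (hcard l')).2 h⟩
  rw [crNum, himage, Set.ncard_image_of_injective _ (hinj.prodMap hinj), Set.ncard_coe_finset,
    crossings]

theorem isPairing_blocks {n : ℕ} {f : Icc 1 (2 * n) → α}
    (hf : IsLabelledPairing (oddColour _) f) : IsPairing n (blocks f) := by
  refine ⟨fun B hB => ⟨card_eq_two_of_parityReversing (parityReversing_blocks_iff.2 hf) hB, ?_⟩,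
    fun x hx => ⟨block f (f ⟨x, hx⟩), ⟨mem_blocks.2 ⟨_, rfl⟩, coe_mem_block.2 rfl⟩, ?_⟩⟩
  · obtain ⟨l, rfl⟩ := mem_blocks.1 hB
    exact block_subset
  · rintro B ⟨hB, hxB⟩
    obtain ⟨l, rfl⟩ := mem_blocks.1 hB
    rw [(mem_block.1 hxB).2]

end Blocks

section LabelWord

variable {α : Type*} {s : Finset ℕ} (P : Finpartition s)

/-- The word obtained from a set partition by labelling its blocks; it inverts `blocks`. -/
def labelWord (e : P.parts ≃ α) (x : s) : α := e ⟨P.part x, P.part_mem.2 x.2⟩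

theorem labelWord_of_mem (e : P.parts ≃ α) (B : P.parts) {a : ℕ} (ha : a ∈ B.1) :
    labelWord P e ⟨a, P.le B.2 ha⟩ = e B := by
  simp only [labelWord, P.part_eq_of_mem B.2 ha]

theorem block_labelWord (e : P.parts ≃ α) (B : P.parts) : block (labelWord P e) (e B) = B := by
  ext a
  simp only [mem_block, labelWord, e.apply_eq_iff_eq, Subtype.ext_iff]
  exact ⟨fun ⟨h, hB⟩ => hB ▸ P.mem_part h, fun ha => ⟨P.le B.2 ha, P.part_eq_of_mem B.2 ha⟩⟩

theorem labelWord_injective : Injective (labelWord P (α := α)) := by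
  intro e e' h
  ext B
  obtain ⟨a, ha⟩ := P.nonempty_of_mem_parts B.2
  rw [← labelWord_of_mem P e B ha, h, labelWord_of_mem P e' B ha]

variable [Fintype α]

theorem blocks_labelWord (e : P.parts ≃ α) : blocks (labelWord P e) = P.parts := by
  ext B
  simp only [mem_blocks, e.surjective.exists, block_labelWord]
  simp

theorem exists_labelWord_eq {f : s → α} (hf : Surjective f) (h : blocks f = P.parts) :
    ∃ e : P.parts ≃ α, labelWord P e = f := by
  have hmem (l) : block f l ∈ P.parts := h ▸ mem_blocks.2 ⟨l, rfl⟩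
  let g : α ≃ P.parts := .ofBijective (fun l => ⟨block f l, hmem l⟩)
    ⟨fun l l' hl => block_injective hf (Subtype.ext_iff.1 hl), fun B => by
      obtain ⟨l, hl⟩ := mem_blocks.1 (h.symm ▸ B.2 : B.1 ∈ blocks f)
      exact ⟨l, Subtype.ext hl⟩⟩
  refine ⟨g.symm, funext fun x => ?_⟩
  rw [labelWord, Equiv.symm_apply_eq]
  exact Subtype.ext (P.part_eq_of_mem (hmem _) (coe_mem_block.2 rfl))

theorem card_labelledPairings_of_blocks (hP : ParityReversing P.parts)
    (hcard : #P.parts = Fintype.card α) :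
    #{f : s → α | IsLabelledPairing (oddColour s) f ∧ blocks f = P.parts} =
      (Fintype.card α).factorial := by
  have e₀ : P.parts ≃ α := Fintype.equivOfCardEq (by rw [Fintype.card_coe, hcard])
  rw [← hcard, ← Fintype.card_coe P.parts, ← Fintype.card_equiv e₀, ← card_univ]
  refine (card_bij (fun e _ => labelWord P e) (fun e _ => ?_)
    (fun e _ e' _ h => labelWord_injective P h) fun f hf => ?_).symm
  · have hblocks := blocks_labelWord P e
    rw [mem_filter_univ, ← parityReversing_blocks_iff, hblocks]
    exact ⟨hP, rfl⟩
  · obtain ⟨hf, hblocks⟩ := (mem_filter_univ f).1 hf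
    obtain ⟨e, he⟩ := exists_labelWord_eq P hf.surjective hblocks
    exact ⟨e, mem_univ e, he⟩

end LabelWord

section Counting

variable {n : ℕ} {q : ℝ} {π : Finset (Finset ℕ)}

theorem IsPairing.exists_finpartition (hπ : IsPairing n π) :
    ∃ P : Finpartition (Icc 1 (2 * n)), P.parts = π ∧ #P.parts = n := by
  let P : Finpartition (Icc 1 (2 * n)) := .ofExistsUnique π (fun B hB => (hπ.1 B hB).2) hπ.2
    fun h => absurd (hπ.1 ∅ h).1 (by simp)
  have hsum : ∑ B ∈ π, #B = 2 * n := P.sum_card_parts.trans (by simp)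
  rw [sum_congr rfl fun B hB => (hπ.1 B hB).1, sum_const, smul_eq_mul] at hsum
  exact ⟨P, rfl, show #π = n by lia⟩

theorem crNum_le (π : Finset (Finset ℕ)) : crNum π ≤ #π * #π := by
  rw [crNum, ← card_product, ← Set.ncard_coe_finset]
  refine Set.ncard_le_ncard (fun p hp => ?_) (finite_toSet _)
  exact mem_coe.2 (mem_product.2 ⟨hp.1, hp.2.1⟩)

/-- The parity-reversing pairings of `[2n]`, collected in a `Finset` so as to sum over them. -/
noncomputable def parityReversingPairings (n : ℕ) : Finset (Finset (Finset ℕ)) :=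
  {π ∈ (Icc 1 (2 * n)).powerset.powerset | IsPairing n π ∧ ParityReversing π}

theorem mem_parityReversingPairings :
    π ∈ parityReversingPairings n ↔ IsPairing n π ∧ ParityReversing π := by
  rw [parityReversingPairings, mem_filter, and_iff_right_iff_imp]
  exact fun h => mem_powerset.2 fun B hB => mem_powerset.2 (h.1.1 B hB).2

theorem rpolyR_eq_sum_pow_crNum (n : ℕ) (q : ℝ) :
    RpolyR n q = ∑ π ∈ parityReversingPairings n, q ^ crNum π := by
  have hmaps : ∀ π ∈ parityReversingPairings n, crNum π ∈ range (n * n + 1) := by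
    intro π hπ
    obtain ⟨P, rfl, hcard⟩ := (mem_parityReversingPairings.1 hπ).1.exists_finpartition
    exact mem_range_succ_iff.2 ((crNum_le P.parts).trans_eq (by rw [hcard]))
  rw [← sum_fiberwise_of_maps_to hmaps, RpolyR]
  refine sum_congr rfl fun k _ => ?_
  have hcount : rCount n k = #{π ∈ parityReversingPairings n | crNum π = k} := by
    rw [rCount, ← Set.ncard_coe_finset]
    congr 1
    ext π
    simp [mem_parityReversingPairings, and_assoc]
  rw [hcount, ← nsmul_eq_mul, ← sum_const]
  exact sum_congr rfl fun π hπ => by rw [(mem_filter.1 hπ).2]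

theorem factorial_mul_rpolyR (n : ℕ) (q : ℝ) :
    n.factorial * RpolyR n q =
      ∑ f : Icc 1 (2 * n) → Fin n with IsLabelledPairing (oddColour _) f, q ^ crossings f := by
  have hmaps : ∀ f ∈ ({f | IsLabelledPairing (oddColour _) f} : Finset (Icc 1 (2 * n) → Fin n)),
      blocks f ∈ parityReversingPairings n := by
    intro f hf
    rw [mem_filter_univ] at hf
    exact mem_parityReversingPairings.2
      ⟨isPairing_blocks hf, parityReversing_blocks_iff.2 hf⟩
  rw [← sum_fiberwise_of_maps_to hmaps, rpolyR_eq_sum_pow_crNum, mul_sum]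
  refine sum_congr rfl fun π hπ => ?_
  obtain ⟨hpairing, hrev⟩ := mem_parityReversingPairings.1 hπ
  obtain ⟨P, rfl, hcard⟩ := hpairing.exists_finpartition
  have hfiber := card_labelledPairings_of_blocks (α := Fin n) P hrev (by simpa using hcard)
  rw [Fintype.card_fin] at hfiber
  rw [filter_filter, ← hfiber, ← nsmul_eq_mul, ← sum_const]
  refine sum_congr rfl fun f hf => ?_
  obtain ⟨hf, hblocks⟩ := (mem_filter_univ f).1 hf
  rw [← hblocks, crNum_blocks hf]

theorem exists_orderIso_lex_Icc (n : ℕ) :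
    ∃ e : Fin n ⊕ₗ (Fin n)ᵒᵈ ≃o Icc 1 (2 * n),
      (∀ i, (e (toLex (.inl i)) : ℕ) = i + 1) ∧
      ∀ i, (e (toLex (.inr (toDual i))) : ℕ) = 2 * n - i := by
  let pos : Fin n ⊕ₗ (Fin n)ᵒᵈ → Icc 1 (2 * n) :=
    mirrorWord (fun i => ⟨i + 1, mem_Icc.2 (by lia)⟩) fun i => ⟨2 * n - i, mem_Icc.2 (by lia)⟩
  have hmono : StrictMono pos := by
    simp only [StrictMono, Lex.forall, Sum.forall, OrderDual.forall, Sum.Lex.toLex_lt_toLex,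
      Sum.lex_inl_inl, Sum.lex_inr_inr, toDual_lt_toDual, pos, mirrorWord_inl, mirrorWord_inr,
      Subtype.mk_lt_mk, Sum.Lex.sep, Sum.lex_inr_inl, false_imp_iff, Fin.lt_def]
    lia
  have hsurj : Surjective pos := by
    rintro ⟨a, ha⟩
    rw [mem_Icc] at ha
    obtain han | han := le_or_gt a n
    · exact ⟨toLex (.inl ⟨a - 1, by lia⟩), Subtype.ext (show a - 1 + 1 = a by lia)⟩
    · exact ⟨toLex (.inr (toDual ⟨2 * n - a, by lia⟩)),
        Subtype.ext (show 2 * n - (2 * n - a) = a by lia)⟩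
  exact ⟨hmono.orderIsoOfSurjective _ hsurj, fun _ => rfl, fun _ => rfl⟩

theorem sum_isLabelledPairing_comp_orderIso {P P' α : Type*} [Preorder P] [Preorder P'] [Fintype P]
    [Fintype P'] [Fintype α] [DecidableEq P] [DecidableEq P'] (e : P' ≃o P) (c : P → Bool) (q : ℝ) :
    ∑ f : P → α with IsLabelledPairing c f, q ^ crossings f =
      ∑ f : P' → α with IsLabelledPairing (c ∘ e) f, q ^ crossings f := by
  refine sum_equiv (e.symm.toEquiv.arrowCongr (Equiv.refl α)) (fun f => ?_) fun f _ => ?_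
  · rw [mem_filter_univ, mem_filter_univ]
    exact (isLabelledPairing_comp_equiv e.toEquiv).symm
  · rw [← crossings_comp_orderIso e]
    rfl

theorem rpolyR_pos_of_le_one (n : ℕ) (hq : q ∈ Set.Ioc (-1) 1) : 0 < RpolyR n q := by
  obtain ⟨e, hinl, hinr⟩ := exists_orderIso_lex_Icc n
  have hcolour : oddColour _ ∘ e = mirrorWord (fun i => oddColour _ (e (toLex (.inl i))))
      fun i => !oddColour _ (e (toLex (.inl i))) := by
    ext (i | i)
    · rfl
    · change oddColour _ (e (toLex (.inr (toDual (ofDual i))))) =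
        !oddColour _ (e (toLex (.inl (ofDual i))))
      simp only [oddColour, hinl, hinr]
      have := (ofDual i).2
      grind
  refine pos_of_mul_pos_right ?_ n.factorial.cast_nonneg
  rw [factorial_mul_rpolyR, sum_isLabelledPairing_comp_orderIso e, hcolour]
  exact sum_pow_crossings_pos rfl hq _

theorem rpolyR_pos (n : ℕ) (hq : -1 < q) : 0 < RpolyR n q := by
  obtain hq₁ | hq₁ := le_or_gt q 1
  · exact rpolyR_pos_of_le_one n ⟨hq, hq₁⟩
  · have hne : (parityReversingPairings n).Nonempty := by
      by_contra h
      have := rpolyR_pos_of_le_one n (q := 1) (by simp)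
      simp [rpolyR_eq_sum_pow_crNum, not_nonempty_iff_eq_empty.1 h] at this
    rw [rpolyR_eq_sum_pow_crNum]
    exact sum_pos (fun π _ => by positivity) hne

end Counting

end

theorem rpoly_pos_and_smooth_general (n : ℕ) (hn : 1 ≤ n) :
    (∀ q ∈ Set.Ioi (-1 : ℝ), 0 < RpolyR n q) ∧
    ContDiffOn ℝ (⊤ : ℕ∞) (fun q : ℝ => RpolyR n q ^ ((1 : ℝ) / (2 * (n : ℝ))))
      (Set.Ioi (-1 : ℝ)) := by
  have hsmooth : ContDiff ℝ (⊤ : ℕ∞) (RpolyR n) := by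
    unfold RpolyR
    fun_prop
  exact ⟨fun q hq => rpolyR_pos n hq,
    hsmooth.contDiffOn.rpow_const_of_ne fun q hq => (rpolyR_pos n hq).ne'⟩

/-- For `n ≥ 1`, `R_n(q) > 0` on `(-1,1)`; consequently `λ_n(q) = (R_n(q))^{1/(2n)}`
is infinitely differentiable on `(-1,1)`. -/
theorem rpoly_pos_and_smooth (n : ℕ) (hn : 1 ≤ n) :
    (∀ q ∈ Set.Ioo (-1 : ℝ) 1, 0 < RpolyR n q) ∧
    ContDiffOn ℝ (⊤ : ℕ∞) (fun q : ℝ => RpolyR n q ^ ((1 : ℝ) / (2 * (n : ℝ))))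
      (Set.Ioo (-1 : ℝ) 1) := by
  obtain ⟨hpos, hsmooth⟩ := rpoly_pos_and_smooth_general n hn
  exact ⟨fun q hq => hpos q hq.1, hsmooth.mono Set.Ioo_subset_Ioi_self⟩
end
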